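/- arXiv:2303.06647 — 4 statements merged into one kernel-verified Lean document; each statement's English description precedes it below -/
import Mathlib

section
/- Let k, m be positive integers with k, m ≥ 2 and set q = ⌈k/m⌉. For every positive integer d with 2d ≤ k − q, one has C_{k, q+d} ≥ C_{k, k−d}. -/
def C (m k ℓ : ℕ) : ℕ :=
  (Finset.univ.filter (fun f : Fin ℓ → Fin m => ∑ i, ((f i : ℕ) + 1) = k)).card

/-!
Record a composition of `k` into `ℓ` parts of size at most `m` by the set `S ⊆ {1, …, k - 1}` of
points that are *not* partial sums: `S` has `k - ℓ` elements and contains no `m` consecutive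
integers. For `d ≤ e`, compare the `d`-sets and the `e`-sets of this kind by double counting the
pairs `S ⊆ T` that contain the same set `A` of multiples of `m`. A set `T` has at most
`(e - |A|).choose (e - d)` such subsets `S`. Conversely, a run of `m` integers always contains a
multiple of `m`, so adding non-multiples to `S` can only create a forbidden run around an element
of `A`; it does not as long as the two gaps of `S` nearest to each element of `A` stay unfilled.
Of the `k - q` non-multiples in `{1, …, k - 1}`, where `q = ⌈k / m⌉`, exactly `d - |A|` lie in `S`
and at most `2 |A|` are such gaps, so at least `e - |A|` may be added if `d + e ≤ k - q`, and
`S` has at least `(e - |A|).choose (e - d)` supersets `T`.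
-/

open Finset

section DoubleCounting

variable {α : Type*} [DecidableEq α] {𝒜 ℬ : Finset (Finset α)} {A S T P : Finset α} {d e n : ℕ}

lemma card_filter_subset_le_choose (h𝒜 : ∀ S ∈ 𝒜, A ⊆ S ∧ #S = d) (hAT : A ⊆ T) :
    #{S ∈ 𝒜 | S ⊆ T} ≤ (#T - #A).choose (d - #A) := by
  rw [← card_sdiff_of_subset hAT, ← card_powersetCard]
  refine card_le_card_of_injOn (· \ A) (fun S hS ↦ ?_) (fun S hS S' hS' hSS' ↦ ?_)
  · obtain ⟨hS, hST⟩ := mem_filter.1 hS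
    obtain ⟨hAS, rfl⟩ := h𝒜 S hS
    exact mem_powersetCard.2 ⟨sdiff_subset_sdiff hST le_rfl, card_sdiff_of_subset hAS⟩
  · rw [← sdiff_union_of_subset (h𝒜 S (mem_filter.1 hS).1).1,
      ← sdiff_union_of_subset (h𝒜 S' (mem_filter.1 hS').1).1]
    exact congrArg (· ∪ A) hSS'

lemma choose_le_card_filter_superset (hSP : Disjoint S P)
    (hℬ : ∀ Y ⊆ P, #Y = n → S ∪ Y ∈ ℬ) : (#P).choose n ≤ #{T ∈ ℬ | S ⊆ T} := by
  rw [← card_powersetCard]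
  refine card_le_card_of_injOn (S ∪ ·) (fun Y hY ↦ ?_) (fun Y hY Z hZ hYZ ↦ ?_)
  · obtain ⟨hYP, hYn⟩ := mem_powersetCard.1 hY
    exact mem_filter.2 ⟨hℬ Y hYP hYn, subset_union_left⟩
  · have hSY := hSP.mono_right (mem_powersetCard.1 hY).1
    have hSZ := hSP.mono_right (mem_powersetCard.1 hZ).1
    rw [← union_sdiff_cancel_left hSY, ← union_sdiff_cancel_left hSZ]
    exact congrArg (· \ S) hYZ

lemma card_le_card_of_exists_extensions (hde : d ≤ e)
    (h𝒜 : ∀ S ∈ 𝒜, A ⊆ S ∧ #S = d) (hℬ : ∀ T ∈ ℬ, A ⊆ T ∧ #T = e)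
    (hext : ∀ S ∈ 𝒜, ∃ P, Disjoint S P ∧ e ≤ #P + #A ∧ ∀ Y ⊆ P, #Y = e - d → S ∪ Y ∈ ℬ) :
    #𝒜 ≤ #ℬ := by
  obtain rfl | ⟨S₀, hS₀⟩ := 𝒜.eq_empty_or_nonempty
  · simp
  have hAd : #A ≤ d := (h𝒜 S₀ hS₀).2 ▸ card_le_card (h𝒜 S₀ hS₀).1
  have hpos : 0 < (e - #A).choose (e - d) := Nat.choose_pos (by lia)
  refine Nat.le_of_mul_le_mul_right
    (card_mul_le_card_mul (· ⊆ ·) (fun S hS ↦ ?_) (fun T hT ↦ ?_)) hpos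
  · obtain ⟨P, hSP, hP, hPℬ⟩ := hext S hS
    exact (Nat.choose_le_choose _ (by lia)).trans (choose_le_card_filter_superset hSP hPℬ)
  · obtain ⟨hAT, rfl⟩ := hℬ T hT
    calc #{S ∈ 𝒜 | S ⊆ T} ≤ (#T - #A).choose (d - #A) := card_filter_subset_le_choose h𝒜 hAT
      _ = (#T - #A).choose (#T - d) := Nat.choose_symm_of_eq_add (by lia)

end DoubleCounting

section Gaps

variable {S : Finset ℕ} {x u : ℕ}

/-- The nearest point at or below `x` outside `S`; it is the junk value `0 ∈ S` when `S` contains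
all of `{0, …, x}`. -/
def gapBelow (S : Finset ℕ) (x : ℕ) : ℕ := Nat.findGreatest (· ∉ S) x

lemma gapBelow_le (S : Finset ℕ) (x : ℕ) : gapBelow S x ≤ x := Nat.findGreatest_le x

lemma gapBelow_notMem (hS : 0 ∉ S) (x : ℕ) : gapBelow S x ∉ S :=
  Nat.findGreatest_spec (P := (· ∉ S)) (Nat.zero_le x) hS

lemma mem_of_gapBelow_lt (hu : gapBelow S x < u) (hux : u ≤ x) : u ∈ S :=
  not_not.1 (Nat.findGreatest_is_greatest hu hux)

lemma exists_ge_notMem (S : Finset ℕ) (x : ℕ) : ∃ y, x ≤ y ∧ y ∉ S :=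
  (Set.Ici_infinite x).exists_notMem_finset S

/-- The nearest point at or above `x` outside `S`. -/
def gapAbove (S : Finset ℕ) (x : ℕ) : ℕ := Nat.find (exists_ge_notMem S x)

lemma le_gapAbove (S : Finset ℕ) (x : ℕ) : x ≤ gapAbove S x :=
  (Nat.find_spec (exists_ge_notMem S x)).1

lemma gapAbove_notMem (S : Finset ℕ) (x : ℕ) : gapAbove S x ∉ S :=
  (Nat.find_spec (exists_ge_notMem S x)).2

lemma mem_of_lt_gapAbove (hxu : x ≤ u) (hu : u < gapAbove S x) : u ∈ S :=
  not_not.1 fun huS ↦ Nat.find_min (exists_ge_notMem S x) hu ⟨hxu, huS⟩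

end Gaps

/-- `S` contains no `m` consecutive natural numbers, disregarding runs that start at `0`. -/
def RunFree (m : ℕ) (S : Finset ℕ) : Prop := ∀ x, ¬ Ioc x (x + m) ⊆ S

lemma RunFree.mono {m : ℕ} {S T : Finset ℕ} (hT : RunFree m T) (hST : S ⊆ T) : RunFree m S :=
  fun x hx ↦ hT x (hx.trans hST)

lemma RunFree.union_Ioo {m j k : ℕ} {S : Finset ℕ} (hS : RunFree m S) (hSj : S ⊆ Ioo 0 j)
    (hjk : j < k) (hkj : k ≤ j + m) : RunFree m (S ∪ Ioo j k) := by
  intro x hx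
  have hmem (u : ℕ) (hxu : x < u) (hux : u ≤ x + m) : u ∈ S ∨ j < u ∧ u < k := by
    simpa using hx (mem_Ioc.2 ⟨hxu, hux⟩)
  have hj : j ∉ S := fun h ↦ (mem_Ioo.1 (hSj h)).2.false
  rcases lt_or_ge x j with hxj | hjx
  · rcases lt_or_ge (x + m) j with hxmj | hjxm
    · refine hS x fun u hu ↦ ?_
      have hu := mem_Ioc.1 hu
      exact (hmem u hu.1 hu.2).resolve_right (by lia)
    · exact (hmem j hxj hjxm).elim hj (by lia)
  · rcases hmem (x + m) (by lia) le_rfl with h | h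
    · have := (mem_Ioo.1 (hSj h)).2
      lia
    · lia

open scoped Classical in
/-- The sets `{1, …, k - 1} \ {partial sums}` of the compositions of `k` into `ℓ` parts of size at
most `m`. A part of size greater than `m` would be a run of `m` consecutive elements. -/
noncomputable def nonCutSets (m k ℓ : ℕ) : Finset (Finset ℕ) :=
  {S ∈ (Ioo 0 k).powerset | #S + ℓ = k ∧ RunFree m S}

section NonCutSets

variable {m k ℓ : ℕ} {S : Finset ℕ}

lemma mem_nonCutSets : S ∈ nonCutSets m k ℓ ↔ S ⊆ Ioo 0 k ∧ #S + ℓ = k ∧ RunFree m S := by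
  simp [nonCutSets]

lemma zero_notMem_of_subset_Ioo (hS : S ⊆ Ioo 0 k) : 0 ∉ S :=
  fun h ↦ (mem_Ioo.1 (hS h)).1.false

lemma filter_lt_gapBelow_union_Ioo (hS : S ⊆ Ioo 0 k) :
    {x ∈ S | x < gapBelow S (k - 1)} ∪ Ioo (gapBelow S (k - 1)) k = S := by
  ext u
  have hgap := gapBelow_notMem (zero_notMem_of_subset_Ioo hS) (k - 1)
  simp only [mem_union, mem_filter, mem_Ioo]
  constructor
  · rintro (⟨hu, -⟩ | ⟨hgu, huk⟩)
    · exact hu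
    · exact mem_of_gapBelow_lt hgu (by lia)
  · intro hu
    have hne : u ≠ gapBelow S (k - 1) := fun h ↦ hgap (h ▸ hu)
    have hlt := (mem_Ioo.1 (hS hu)).2
    exact hne.lt_or_gt.imp (⟨hu, ·⟩) (⟨·, hlt⟩)

lemma gapBelow_union_Ioo {j : ℕ} (hS : S ⊆ Ioo 0 j) (hjk : j < k) :
    gapBelow (S ∪ Ioo j k) (k - 1) = j := by
  refine Nat.findGreatest_eq_iff.2 ⟨by lia, fun _ hj ↦ ?_, fun u hju huk ↦ ?_⟩
  · rcases mem_union.1 hj with h | h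
    · exact (mem_Ioo.1 (hS h)).2.false
    · exact (mem_Ioo.1 h).1.false
  · exact not_not.2 (mem_union_right _ (mem_Ioo.2 ⟨hju, by lia⟩))

lemma filter_lt_union_Ioo {j : ℕ} (hS : S ⊆ Ioo 0 j) : {x ∈ S ∪ Ioo j k | x < j} = S := by
  rw [filter_union, filter_true_of_mem fun x hx ↦ (mem_Ioo.1 (hS hx)).2,
    filter_false_of_mem fun x hx ↦ (mem_Ioo.1 hx).1.not_gt, union_empty]

lemma card_union_Ioo {j : ℕ} (hS : S ⊆ Ioo 0 j) : #(S ∪ Ioo j k) = #S + (k - j - 1) := by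
  rw [card_union_of_disjoint, Nat.card_Ioo]
  exact disjoint_left.2 fun x hx hx' ↦ (mem_Ioo.1 (hS hx)).2.not_gt (mem_Ioo.1 hx').1

lemma union_Ioo_mem_nonCutSets {j : ℕ} (hS : S ∈ nonCutSets m j ℓ) (hjk : j < k)
    (hkj : k ≤ j + m) : S ∪ Ioo j k ∈ nonCutSets m k (ℓ + 1) := by
  obtain ⟨hSj, hcard, hrun⟩ := mem_nonCutSets.1 hS
  refine mem_nonCutSets.2 ⟨union_subset (hSj.trans ?_) ?_, ?_, hrun.union_Ioo hSj hjk hkj⟩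
  · exact Ioo_subset_Ioo_right hjk.le
  · exact Ioo_subset_Ioo_left j.zero_le
  · rw [card_union_Ioo hSj]
    lia

lemma gapBelow_mem_Ico (hS : S ∈ nonCutSets m k (ℓ + 1)) :
    gapBelow S (k - 1) ∈ Ico (k - m) k := by
  obtain ⟨-, hcard, hrun⟩ := mem_nonCutSets.1 hS
  have hle := gapBelow_le S (k - 1)
  refine mem_Ico.2 ⟨?_, by lia⟩
  by_contra! hlt
  refine hrun (gapBelow S (k - 1)) fun u hu ↦ ?_
  have hu := mem_Ioc.1 hu
  exact mem_of_gapBelow_lt hu.1 (by lia)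

lemma filter_lt_gapBelow_mem_nonCutSets (hS : S ∈ nonCutSets m k (ℓ + 1)) :
    {x ∈ S | x < gapBelow S (k - 1)} ∈ nonCutSets m (gapBelow S (k - 1)) ℓ := by
  obtain ⟨hSk, hcard, hrun⟩ := mem_nonCutSets.1 hS
  have hsub : {x ∈ S | x < gapBelow S (k - 1)} ⊆ Ioo 0 (gapBelow S (k - 1)) := fun x hx ↦
    have hx := mem_filter.1 hx
    mem_Ioo.2 ⟨(mem_Ioo.1 (hSk hx.1)).1, hx.2⟩
  refine mem_nonCutSets.2 ⟨hsub, ?_, hrun.mono (filter_subset _ _)⟩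
  have hsplit := card_union_Ioo (k := k) hsub
  rw [filter_lt_gapBelow_union_Ioo hSk] at hsplit
  have hle := gapBelow_le S (k - 1)
  lia

lemma card_nonCutSets_succ (m k ℓ : ℕ) :
    #(nonCutSets m k (ℓ + 1)) = ∑ j ∈ Ico (k - m) k, #(nonCutSets m j ℓ) := by
  rw [← card_sigma]
  refine card_nbij' (fun S ↦ ⟨gapBelow S (k - 1), {x ∈ S | x < gapBelow S (k - 1)}⟩)
    (fun a ↦ a.2 ∪ Ioo a.1 k) (fun S hS ↦ ?_) ?_ (fun S hS ↦ ?_) ?_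
  · exact mem_sigma.2 ⟨gapBelow_mem_Ico hS, filter_lt_gapBelow_mem_nonCutSets hS⟩
  · rintro ⟨j, S⟩ ha
    obtain ⟨hj, hS⟩ := mem_sigma.1 ha
    obtain ⟨hkj, hjk⟩ := mem_Ico.1 hj
    exact union_Ioo_mem_nonCutSets hS hjk (Nat.sub_le_iff_le_add.1 hkj)
  · exact filter_lt_gapBelow_union_Ioo (mem_nonCutSets.1 hS).1
  · rintro ⟨j, S⟩ ha
    obtain ⟨hj, hS⟩ := mem_sigma.1 ha
    have hSj := (mem_nonCutSets.1 hS).1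
    simp only [gapBelow_union_Ioo hSj (mem_Ico.1 hj).2, filter_lt_union_Ioo hSj]

lemma card_nonCutSets_zero (hm : 0 < m) (k : ℕ) :
    #(nonCutSets m k 0) = if k = 0 then 1 else 0 := by
  split_ifs with hk
  · subst hk
    rw [card_eq_one]
    refine ⟨∅, eq_singleton_iff_unique_mem.2 ⟨?_, fun S hS ↦ ?_⟩⟩
    · exact mem_nonCutSets.2 ⟨by simp, by simp, fun x ↦ by simp [hm]⟩
    · simpa using (mem_nonCutSets.1 hS).1
  · refine card_eq_zero.2 (eq_empty_of_forall_notMem fun S hS ↦ ?_)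
    obtain ⟨hSk, hcard, -⟩ := mem_nonCutSets.1 hS
    have := card_le_card hSk
    rw [Nat.card_Ioo] at this
    lia

end NonCutSets

lemma C_zero (m k : ℕ) : C m k 0 = if k = 0 then 1 else 0 := by
  simp [C, filter_const, eq_comm (a := k), apply_ite card]

lemma C_succ (m k ℓ : ℕ) : C m k (ℓ + 1) = ∑ j ∈ Ico (k - m) k, C m j ℓ := by
  have hsum (f : Fin (ℓ + 1) → Fin m) :
      ∑ i, ((f i : ℕ) + 1) = f 0 + 1 + ∑ i, ((Fin.tail f i : ℕ) + 1) := Fin.sum_univ_succ _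
  simp only [C, ← card_sigma]
  refine card_bij (fun f _ ↦ ⟨k - (f 0 + 1), Fin.tail f⟩) (fun f hf ↦ ?_)
    (fun f hf g hg hfg ↦ ?_) ?_
  · simp only [mem_filter_univ, hsum, mem_sigma, mem_Ico] at hf ⊢
    lia
  · simp only [mem_filter_univ, hsum] at hf hg
    obtain ⟨-, htail⟩ := Sigma.mk.inj_iff.1 hfg
    have htail : Fin.tail f = Fin.tail g := eq_of_heq htail
    have hhead : f 0 = g 0 := Fin.ext (by rw [htail] at hf; lia)
    rw [← Fin.cons_self_tail f, ← Fin.cons_self_tail g, hhead, htail]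
  · rintro ⟨j, g⟩ ha
    simp only [mem_filter_univ, mem_sigma, mem_Ico] at ha
    refine ⟨Fin.cons (⟨k - j - 1, by lia⟩ : Fin m) g, ?_, ?_⟩
    · simp only [mem_filter_univ, hsum, Fin.tail_cons, Fin.cons_zero]
      lia
    · simp only [Fin.tail_cons, Fin.cons_zero]
      congr 1
      lia

theorem C_eq_card_nonCutSets {m : ℕ} (hm : 0 < m) (k ℓ : ℕ) : C m k ℓ = #(nonCutSets m k ℓ) := by
  induction ℓ generalizing k with
  | zero => rw [C_zero, card_nonCutSets_zero hm]
  | succ ℓ ih => simp only [C_succ, card_nonCutSets_succ, ih]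

section Extension

variable {m k : ℕ} {S Y : Finset ℕ} {p : ℕ → Prop} [DecidablePred p]

/-- The points of `{1, …, k - 1}` outside `S` and `p` that are not one of the two gaps of `S`
enclosing an element of `S` in `p`. If `p` meets every run of `m` integers, these points may be
added freely to a run-free `S`. -/
def extensionPool (p : ℕ → Prop) [DecidablePred p] (k : ℕ) (S : Finset ℕ) : Finset ℕ :=
  {x ∈ Ioo 0 k | ¬ p x} \
    ({x ∈ S | ¬ p x} ∪ ({x ∈ S | p x}.image (gapBelow S) ∪ {x ∈ S | p x}.image (gapAbove S)))

lemma extensionPool_subset_Ioo : extensionPool p k S ⊆ Ioo 0 k :=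
  sdiff_subset.trans (filter_subset _ _)

lemma not_of_mem_extensionPool {x : ℕ} (hx : x ∈ extensionPool p k S) : ¬ p x :=
  (mem_filter.1 (mem_sdiff.1 hx).1).2

lemma disjoint_extensionPool : Disjoint S (extensionPool p k S) :=
  disjoint_left.2 fun _ hxS hx ↦ (mem_sdiff.1 hx).2 <|
    mem_union_left _ <| mem_filter.2 ⟨hxS, not_of_mem_extensionPool hx⟩

lemma gapBelow_notMem_extensionPool {z : ℕ} (hz : z ∈ S) (hpz : p z) :
    gapBelow S z ∉ extensionPool p k S := fun h ↦ (mem_sdiff.1 h).2 <|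
  mem_union_right _ <| mem_union_left _ <| mem_image_of_mem _ <| mem_filter.2 ⟨hz, hpz⟩

lemma gapAbove_notMem_extensionPool {z : ℕ} (hz : z ∈ S) (hpz : p z) :
    gapAbove S z ∉ extensionPool p k S := fun h ↦ (mem_sdiff.1 h).2 <|
  mem_union_right _ <| mem_union_right _ <| mem_image_of_mem _ <| mem_filter.2 ⟨hz, hpz⟩

lemma card_filter_not_le_card_extensionPool_add (p : ℕ → Prop) [DecidablePred p] (k : ℕ)
    (S : Finset ℕ) :
    #{x ∈ Ioo 0 k | ¬ p x} ≤ #(extensionPool p k S) + #S + #{x ∈ S | p x} := by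
  set A := {x ∈ S | p x}
  set B := {x ∈ S | ¬ p x}
  have hAB : #A + #B = #S := card_filter_add_card_filter_not p
  have hremoved : #(B ∪ (A.image (gapBelow S) ∪ A.image (gapAbove S))) ≤ #B + (#A + #A) :=
    (card_union_le _ _).trans <| Nat.add_le_add_left
      ((card_union_le _ _).trans (Nat.add_le_add card_image_le card_image_le)) _
  have hpool : #{x ∈ Ioo 0 k | ¬ p x} - #(B ∪ (A.image (gapBelow S) ∪ A.image (gapAbove S))) ≤
    #(extensionPool p k S) := le_card_sdiff _ _
  lia

lemma RunFree.union_of_subset_extensionPool (hp : ∀ x, ∃ z ∈ Ioc x (x + m), p z)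
    (hS : RunFree m S) (hS0 : 0 ∉ S) (hY : Y ⊆ extensionPool p k S) : RunFree m (S ∪ Y) := by
  intro x hx
  have mem_S {u : ℕ} (hxu : x < u) (hux : u ≤ x + m) (hu : u ∉ extensionPool p k S) : u ∈ S :=
    (mem_union.1 (hx (mem_Ioc.2 ⟨hxu, hux⟩))).resolve_right fun huY ↦ hu (hY huY)
  obtain ⟨z, hz, hpz⟩ := hp x
  obtain ⟨hxz, hzx⟩ := mem_Ioc.1 hz
  have hzS : z ∈ S := mem_S hxz hzx fun h ↦ not_of_mem_extensionPool h hpz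
  have hbelow : gapBelow S z ≤ x := by
    by_contra! hlt
    exact gapBelow_notMem hS0 z
      (mem_S hlt ((gapBelow_le S z).trans hzx) (gapBelow_notMem_extensionPool hzS hpz))
  have habove : x + m < gapAbove S z := by
    by_contra! hle
    exact gapAbove_notMem S z
      (mem_S (hxz.trans_le (le_gapAbove S z)) hle (gapAbove_notMem_extensionPool hzS hpz))
  refine hS x fun u hu ↦ ?_
  obtain ⟨hxu, hux⟩ := mem_Ioc.1 hu
  rcases le_total u z with huz | hzu
  · exact mem_of_gapBelow_lt (hbelow.trans_lt hxu) huz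
  · exact mem_of_lt_gapAbove hzu (hux.trans_lt habove)

end Extension

section Comparison

variable {m k ℓ ℓ' : ℕ} {p : ℕ → Prop} [DecidablePred p]

lemma card_filter_nonCutSets_le (hp : ∀ x, ∃ z ∈ Ioc x (x + m), p z) (hle : ℓ' ≤ ℓ)
    (hsum : 2 * k ≤ #{x ∈ Ioo 0 k | ¬ p x} + ℓ + ℓ') (A : Finset ℕ) :
    #{S ∈ nonCutSets m k ℓ | S.filter p = A} ≤
      #{S ∈ nonCutSets m k ℓ' | S.filter p = A} := by
  have hfiber (n : ℕ) : ∀ S ∈ {S ∈ nonCutSets m k n | S.filter p = A}, A ⊆ S ∧ #S = k - n := by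
    intro S hSA
    obtain ⟨hS, rfl⟩ := mem_filter.1 hSA
    exact ⟨filter_subset _ _, Nat.eq_sub_of_add_eq (mem_nonCutSets.1 hS).2.1⟩
  refine card_le_card_of_exists_extensions (by lia) (hfiber ℓ) (hfiber ℓ') fun S hSA ↦ ?_
  obtain ⟨hS, rfl⟩ := mem_filter.1 hSA
  obtain ⟨hSk, hcard, hrun⟩ := mem_nonCutSets.1 hS
  have hpool := card_filter_not_le_card_extensionPool_add p k S
  refine ⟨extensionPool p k S, disjoint_extensionPool, by lia, fun Y hY hYcard ↦ ?_⟩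
  refine mem_filter.2 ⟨mem_nonCutSets.2 ⟨?_, ?_, ?_⟩, ?_⟩
  · exact union_subset hSk (hY.trans extensionPool_subset_Ioo)
  · rw [card_union_of_disjoint (disjoint_extensionPool.mono_right hY)]
    lia
  · exact hrun.union_of_subset_extensionPool hp (zero_notMem_of_subset_Ioo hSk) hY
  · rw [filter_union, filter_false_of_mem fun x hx ↦ not_of_mem_extensionPool (hY hx), union_empty]

theorem card_nonCutSets_le (hp : ∀ x, ∃ z ∈ Ioc x (x + m), p z) (hle : ℓ' ≤ ℓ)
    (hsum : 2 * k ≤ #{x ∈ Ioo 0 k | ¬ p x} + ℓ + ℓ') :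
    #(nonCutSets m k ℓ) ≤ #(nonCutSets m k ℓ') := by
  have hmaps (n : ℕ) : ∀ S ∈ nonCutSets m k n, S.filter p ∈ (Ioo 0 k).powerset := fun S hS ↦
    mem_powerset.2 ((filter_subset _ _).trans (mem_nonCutSets.1 hS).1)
  rw [card_eq_sum_card_fiberwise (hmaps ℓ), card_eq_sum_card_fiberwise (hmaps ℓ')]
  exact sum_le_sum fun A _ ↦ card_filter_nonCutSets_le hp hle hsum A

end Comparison

lemma exists_mem_Ioc_dvd {m : ℕ} (hm : 0 < m) (x : ℕ) : ∃ z ∈ Ioc x (x + m), m ∣ z := by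
  refine ⟨m * (x / m + 1), mem_Ioc.2 ⟨Nat.lt_mul_div_succ x hm, ?_⟩, dvd_mul_right _ _⟩
  rw [mul_add_one]
  exact Nat.add_le_add_right (Nat.mul_div_le x m) m

lemma card_Ioo_filter_not_dvd_add_ceil {m : ℕ} (hm : 0 < m) (k : ℕ) :
    #{x ∈ Ioo 0 k | ¬ m ∣ x} + (k + m - 1) / m = k := by
  cases k with
  | zero => simp [hm]
  | succ k =>
    have hdvd : #{x ∈ Ioo 0 (k + 1) | m ∣ x} = k / m := Nat.Ioc_filter_dvd_card_eq_div k m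
    have hsplit := card_filter_add_card_filter_not (s := Ioo 0 (k + 1)) (m ∣ ·)
    have hceil : (k + 1 + m - 1) / m = k / m + 1 := by
      rw [Nat.add_right_comm, Nat.add_sub_cancel, Nat.add_div_right k hm]
    rw [hdvd, Nat.card_Ioo] at hsplit
    lia

theorem stmt_8_general {m k ℓ ℓ' : ℕ} (hm : 0 < m) (hle : ℓ' ≤ ℓ)
    (hsum : k + (k + m - 1) / m ≤ ℓ + ℓ') : C m k ℓ ≤ C m k ℓ' := by
  have hcard := card_Ioo_filter_not_dvd_add_ceil hm k
  rw [C_eq_card_nonCutSets hm, C_eq_card_nonCutSets hm]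
  exact card_nonCutSets_le (exists_mem_Ioc_dvd hm) hle (by lia)

theorem stmt_8 (k m d : ℕ) (hk : 2 ≤ k) (hm : 2 ≤ m) (hd : 1 ≤ d)
    (h2d : 2 * d ≤ k - (k + m - 1) / m) :
    C m k (k - d) ≤ C m k ((k + m - 1) / m + d) :=
  stmt_8_general (by lia) (by lia) (by lia)
end

section
/- Let k, m ≥ 2, q = ⌈k/m⌉, and n ≥ k + q. For every ℓ with q ≤ ℓ ≤ ⌊(n−1)/2⌋, one has C_{k,ℓ} ≥ C_{k, n−ℓ}. -/
/-!
Index the compositions of `k` by their excess `s = k - ℓ` instead of their length `ℓ`, and let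
`Q k = ∑ s, C m k (k - s) X ^ s`. The claim says that the coefficients of `Q k` satisfy `q s ≤ q t`
whenever `s ≤ t` and `s + t ≤ k - ⌈k / m⌉`. Write `Flawless D p` for this condition with bound `D`.
It is additive in `p`, and multiplying `p` by `1 + X` or by `X` raises `D` by `1` or by `2`.

Removing the first part gives `Q (k + 1) = ∑ j < m, X ^ j * Q (k - j)`. The bound `k - ⌈k / m⌉`
grows by one with each step of `k` except at the boundary between two blocks of `m` consecutive
indices. Within a block, the summand `Q k` of the recurrence falls short of the required bound by
one. The remedy is to write the `i`-th entry of a block as `S i + Z i`, where `Z i` collects the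
terms `X ^ (i + m - 1 - h) * P h`, for `i ≤ h < m - 1`, coming from the entries `P h` of the
preceding block. The two-term recurrence `Q (k + 1) + X ^ m * Q (k - m) = (1 + X) * Q k` then
becomes the subtraction-free rule `S (i + 1) = (1 + X) * S i + Z i`, and each `Z i` satisfies a
bound with room to spare.
-/

open Finset
open Polynomial hiding C

section Flawless

/-- The coefficients of `p` satisfy `p.coeff s ≤ p.coeff t` for `s ≤ t` as long as the midpoint of
`s` and `t` is at most `D / 2`. Nonnegativity of the coefficients is not part of the definition, as
it is automatic over the canonically ordered semirings considered here. -/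
def Flawless {R : Type*} [Semiring R] [LE R] (D : ℕ) (p : R[X]) : Prop :=
  ∀ ⦃s t : ℕ⦄, s ≤ t → s + t ≤ D → p.coeff s ≤ p.coeff t

namespace Flawless

lemma mono {R : Type*} [Semiring R] [LE R] {D E : ℕ} {p : R[X]} (hp : Flawless D p)
    (hED : E ≤ D) : Flawless E p :=
  fun _ _ hst hE => hp hst (hE.trans hED)

lemma of_bound_zero {R : Type*} [Semiring R] [Preorder R] (p : R[X]) : Flawless 0 p := by
  intro s t _ hD
  rw [show s = t by lia]

section OrderedAddMonoid

variable {R : Type*} [Semiring R] [PartialOrder R] [IsOrderedAddMonoid R] {D : ℕ}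

lemma add {p q : R[X]} (hp : Flawless D p) (hq : Flawless D q) : Flawless D (p + q) := by
  intro s t hst hD
  rw [coeff_add, coeff_add]
  exact add_le_add (hp hst hD) (hq hst hD)

lemma sum {ι : Type*} {S : Finset ι} {p : ι → R[X]} (hp : ∀ i ∈ S, Flawless D (p i)) :
    Flawless D (∑ i ∈ S, p i) := by
  intro s t hst hD
  rw [finsetSum_coeff, finsetSum_coeff]
  exact sum_le_sum fun i hi => hp i hi hst hD

end OrderedAddMonoid

section CanonicallyOrdered

variable {R : Type*} [Semiring R] [PartialOrder R] [CanonicallyOrderedAdd R] {D : ℕ} {p : R[X]}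

lemma X_pow_mul (hp : Flawless D p) (j : ℕ) : Flawless (D + 2 * j) (X ^ j * p) := by
  intro s t hst hD
  rw [coeff_X_pow_mul', coeff_X_pow_mul']
  by_cases hs : j ≤ s
  · rw [if_pos hs, if_pos (hs.trans hst)]
    exact hp (by lia) (by lia)
  · rw [if_neg hs]
    exact zero_le

lemma one_add_X_mul [IsOrderedAddMonoid R] (hp : Flawless D p) :
    Flawless (D + 1) ((1 + X) * p) := by
  intro s t hst hD
  rcases hst.eq_or_lt with rfl | hlt
  · exact le_rfl
  obtain ⟨t, rfl⟩ : ∃ u, t = u + 1 := ⟨t - 1, by lia⟩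
  have h_inner : p.coeff s ≤ p.coeff t := hp (by lia) (by lia)
  rw [add_mul, one_mul, coeff_add, coeff_add, coeff_X_mul, add_comm (p.coeff (t + 1))]
  refine add_le_add h_inner ?_
  cases s with
  | zero => simp
  | succ s =>
    rw [coeff_X_mul]
    exact hp (by lia) (by lia)

end CanonicallyOrdered

end Flawless

end Flawless

section Recurrence

lemma polynomial_add_right_cancel {R : Type*} [Semiring R] [IsRightCancelAdd R] {p q r : R[X]}
    (h : p + r = q + r) : p = q := by
  ext s
  have hs : (p + r).coeff s = (q + r).coeff s := by rw [h]
  rw [coeff_add, coeff_add] at hs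
  exact add_right_cancel hs

variable {R : Type*} [CommSemiring R] {d : ℕ} {P : ℕ → R[X]}

/-- The part `∑_{i ≤ h < d} X ^ (i + d - h) * P (N + h)` of the expansion of `P (N + d + 1 + i)`
in terms of the block `P N, …, P (N + d)`: it accounts for a first step leading directly into this
block, but not onto its last entry. -/
noncomputable def blockTail (P : ℕ → R[X]) (d N i : ℕ) : R[X] :=
  ∑ h ∈ Ico i d, X ^ (i + d - h) * P (N + h)

lemma X_mul_blockTail (P : ℕ → R[X]) (N : ℕ) {i : ℕ} (hi : i < d) :
    X * blockTail P d N i = blockTail P d N (i + 1) + X ^ (d + 1) * P (N + i) := by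
  unfold blockTail
  rw [sum_eq_sum_Ico_succ_bot hi, mul_add, mul_sum, add_comm]
  congr 1
  · refine sum_congr rfl fun h hh => ?_
    have := mem_Ico.mp hh
    rw [show i + 1 + d - h = i + d - h + 1 by lia]
    ring
  · rw [Nat.add_sub_cancel_left]
    ring

lemma flawless_blockTail [PartialOrder R] [CanonicallyOrderedAdd R] [IsOrderedAddMonoid R]
    {E N : ℕ} (hblock : ∀ h < d, Flawless (E + h) (P (N + h))) (i : ℕ) :
    Flawless (E + d + 1 + 2 * i) (blockTail P d N i) := by
  refine Flawless.sum fun h hh => ?_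
  have := mem_Ico.mp hh
  exact ((hblock h (by lia)).X_pow_mul _).mono (by lia)

lemma add_X_pow_mul_eq_one_add_X_mul
    (hP : ∀ n, P (n + d + 1) = ∑ h ∈ range (d + 1), X ^ (d - h) * P (n + h)) (n : ℕ) :
    P (n + d + 2) + X ^ (d + 1) * P n = (1 + X) * P (n + d + 1) := by
  calc P (n + d + 2) + X ^ (d + 1) * P n
      = ∑ h ∈ range (d + 2), X ^ (d + 1 - h) * P (n + h) := by
        rw [sum_range_succ', show n + d + 2 = n + 1 + d + 1 by ring, hP]
        simp only [Nat.add_sub_add_right, Nat.sub_zero, add_zero, add_assoc, add_comm 1]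
    _ = X * ∑ h ∈ range (d + 1), X ^ (d - h) * P (n + h) + P (n + d + 1) := by
        rw [sum_range_succ, Nat.sub_self, pow_zero, one_mul, mul_sum, add_assoc n]
        congr 1
        refine sum_congr rfl fun h hh => ?_
        rw [Nat.sub_add_comm (mem_range_succ_iff.mp hh)]
        ring
    _ = (1 + X) * P (n + d + 1) := by
        rw [← hP]
        ring

variable [PartialOrder R] [CanonicallyOrderedAdd R] [IsOrderedAddMonoid R] [IsRightCancelAdd R]

lemma exists_flawless_add_blockTail
    (hP : ∀ n, P (n + d + 1) = ∑ h ∈ range (d + 1), X ^ (d - h) * P (n + h))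
    {E N : ℕ} (hblock : ∀ i ≤ d, Flawless (E + i) (P (N + i))) {i : ℕ} (hi : i ≤ d) :
    ∃ S, Flawless (E + d + i) S ∧ P (N + d + 1 + i) = S + blockTail P d N i := by
  induction i with
  | zero =>
    refine ⟨P (N + d), hblock d le_rfl, ?_⟩
    rw [add_zero, hP, sum_range_succ, range_eq_Ico, Nat.sub_self, pow_zero, one_mul, add_comm,
      blockTail, zero_add]
  | succ i ih =>
    obtain ⟨S, hS, hPS⟩ := ih (by lia)
    have hZ : Flawless (E + d + 1 + 2 * i) (blockTail P d N i) :=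
      flawless_blockTail (fun h hh => hblock h hh.le) i
    refine ⟨(1 + X) * S + blockTail P d N i, hS.one_add_X_mul.add (hZ.mono (by lia)), ?_⟩
    refine polynomial_add_right_cancel (r := X ^ (d + 1) * P (N + i)) ?_
    calc P (N + d + 1 + (i + 1)) + X ^ (d + 1) * P (N + i)
        = (1 + X) * P (N + d + 1 + i) := by
          convert add_X_pow_mul_eq_one_add_X_mul hP (N + i) using 3 <;> ring
      _ = (1 + X) * S + blockTail P d N i + X * blockTail P d N i := by
          rw [hPS]
          ring
      _ = (1 + X) * S + blockTail P d N i + blockTail P d N (i + 1)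
            + X ^ (d + 1) * P (N + i) := by
          rw [X_mul_blockTail P N hi]
          ring

lemma Flawless.next_block
    (hP : ∀ n, P (n + d + 1) = ∑ h ∈ range (d + 1), X ^ (d - h) * P (n + h))
    {E N : ℕ} (hblock : ∀ i ≤ d, Flawless (E + i) (P (N + i))) {i : ℕ} (hi : i ≤ d) :
    Flawless (E + d + i) (P (N + d + 1 + i)) := by
  obtain ⟨S, hS, hPS⟩ := exists_flawless_add_blockTail hP hblock hi
  have hZ : Flawless (E + d + 1 + 2 * i) (blockTail P d N i) :=
    flawless_blockTail (fun h hh => hblock h hh.le) i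
  rw [hPS]
  exact hS.add (hZ.mono (by lia))

lemma Flawless.of_recurrence
    (hP : ∀ n, P (n + d + 1) = ∑ h ∈ range (d + 1), X ^ (d - h) * P (n + h))
    (hinit : ∀ i ≤ d, Flawless i (P i)) (c : ℕ) {i : ℕ} (hi : i ≤ d) :
    Flawless (c * d + i) (P (c * (d + 1) + i)) := by
  induction c generalizing i with
  | zero => simpa using hinit i hi
  | succ c ih =>
    have hnext := Flawless.next_block hP (fun _ => ih) hi
    convert hnext using 2 <;> ring

end Recurrence

section Compositions

lemma C_eq_zero_of_lt (m : ℕ) {k ℓ : ℕ} (h : k < ℓ) : C m k ℓ = 0 := by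
  rw [C, card_eq_zero, filter_eq_empty_iff]
  intro f _ hf
  have hle : ∑ _i : Fin ℓ, 1 ≤ ∑ i, ((f i : ℕ) + 1) := sum_le_sum fun i _ => by lia
  rw [hf, sum_const, card_univ, Fintype.card_fin, smul_eq_mul, mul_one] at hle
  lia

lemma C_succ_zero (m k : ℕ) : C m (k + 1) 0 = 0 := by
  simp [C]

lemma card_filter_head_add_sum_eq (m k ℓ : ℕ) (j : Fin m) :
    #{f : Fin ℓ → Fin m | (j : ℕ) + 1 + ∑ i, ((f i : ℕ) + 1) = k + 1} =
      if (j : ℕ) ≤ k then C m (k - j) ℓ else 0 := by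
  split_ifs with hj
  · exact congrArg card (filter_congr fun f _ => by lia)
  · exact card_eq_zero.mpr (filter_eq_empty_iff.mpr fun f _ => by lia)

lemma C_succ_succ (m k ℓ : ℕ) :
    C m (k + 1) (ℓ + 1) = ∑ j ∈ range (min m (k + 1)), C m (k - j) ℓ := by
  calc C m (k + 1) (ℓ + 1)
      = ∑ j : Fin m, #{f : Fin ℓ → Fin m | (j : ℕ) + 1 + ∑ i, ((f i : ℕ) + 1) = k + 1} := by
        simp only [C, card_filter]
        rw [← (Fin.consEquiv fun _ => Fin m).sum_comp, Fintype.sum_prod_type]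
        simp [Fin.consEquiv, Fin.sum_univ_succ]
    _ = ∑ j ∈ range m, if j ≤ k then C m (k - j) ℓ else 0 := by
        rw [sum_range]
        exact sum_congr rfl fun j _ => card_filter_head_add_sum_eq m k ℓ j
    _ = ∑ j ∈ range (min m (k + 1)), C m (k - j) ℓ := by
        rw [← sum_filter]
        exact sum_congr (by ext j; simp) fun _ _ => rfl

/-- The generating polynomial of the compositions of `k` into parts of size at most `m`, where a
composition with `ℓ` parts is counted by its excess `k - ℓ`. -/
noncomputable def excessPoly (m k : ℕ) : ℕ[X] :=
  ∑ s ∈ range (k + 1), monomial s (C m k (k - s))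

lemma coeff_excessPoly (m k s : ℕ) :
    (excessPoly m k).coeff s = if s ≤ k then C m k (k - s) else 0 := by
  simp [excessPoly, coeff_monomial]

lemma coeff_X_pow_mul_excessPoly (m : ℕ) {k j : ℕ} (hj : j ≤ k) (s : ℕ) :
    (X ^ j * excessPoly m (k - j)).coeff s = if s ≤ k then C m (k - j) (k - s) else 0 := by
  rw [coeff_X_pow_mul', coeff_excessPoly]
  by_cases hjs : j ≤ s
  · rw [if_pos hjs, tsub_tsub_tsub_cancel_right hjs]
    exact if_congr (by lia) rfl rfl
  · rw [if_neg hjs, if_pos (by lia), C_eq_zero_of_lt m (by lia)]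

lemma excessPoly_succ (m k : ℕ) :
    excessPoly m (k + 1) = ∑ j ∈ range (min m (k + 1)), X ^ j * excessPoly m (k - j) := by
  ext s
  have hcoeff : ∀ j ∈ range (min m (k + 1)), (X ^ j * excessPoly m (k - j)).coeff s =
      if s ≤ k then C m (k - j) (k - s) else 0 := fun j hj =>
    coeff_X_pow_mul_excessPoly m (by have := mem_range.mp hj; lia) s
  rw [finsetSum_coeff, sum_congr rfl hcoeff, coeff_excessPoly]
  rcases lt_trichotomy s (k + 1) with hs | rfl | hs
  · simp only [if_pos hs.le, if_pos (Nat.lt_succ_iff.mp hs)]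
    rw [Nat.sub_add_comm (by lia), C_succ_succ]
  · simp [C_succ_zero]
  · simp [hs.not_ge, show ¬s ≤ k by lia]

lemma excessPoly_recurrence (d n : ℕ) :
    excessPoly (d + 1) (n + d + 1) =
      ∑ h ∈ range (d + 1), X ^ (d - h) * excessPoly (d + 1) (n + h) := by
  rw [excessPoly_succ, min_eq_left (by lia), ← sum_range_reflect]
  refine sum_congr rfl fun h hh => ?_
  have := mem_range.mp hh
  congr 2
  lia

lemma excessPoly_add_two_of_lt {m k : ℕ} (hk : k + 1 < m) :
    excessPoly m (k + 2) = (1 + X) * excessPoly m (k + 1) := by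
  have hX : X * excessPoly m (k + 1) =
      ∑ j ∈ range (k + 1), X ^ (j + 1) * excessPoly m (k - j) := by
    rw [excessPoly_succ, min_eq_right hk.le, mul_sum]
    exact sum_congr rfl fun j _ => by ring
  rw [excessPoly_succ m (k + 1), min_eq_right (by lia), sum_range_succ', add_mul, hX]
  simp only [Nat.add_sub_add_right, Nat.sub_zero, pow_zero]
  ring

lemma flawless_excessPoly_of_lt {m i : ℕ} (hi : i < m) : Flawless i (excessPoly m (i + 1)) := by
  induction i with
  | zero => exact Flawless.of_bound_zero _
  | succ i ih =>
    rw [excessPoly_add_two_of_lt hi]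
    exact (ih (by lia)).one_add_X_mul

lemma flawless_excessPoly {m : ℕ} (hm : 0 < m) (k : ℕ) :
    Flawless (k - (k + m - 1) / m) (excessPoly m k) := by
  obtain ⟨d, rfl⟩ := Nat.exists_eq_add_one.mpr hm
  obtain - | k := k
  · simpa using Flawless.of_bound_zero (excessPoly (d + 1) 0)
  have hceil : (k + 1 + (d + 1) - 1) / (d + 1) = k / (d + 1) + 1 := by
    rw [show k + 1 + (d + 1) - 1 = k + (d + 1) by lia, Nat.add_div_right k hm]
  have hblock : Flawless (k / (d + 1) * d + k % (d + 1))
      (excessPoly (d + 1) (k / (d + 1) * (d + 1) + k % (d + 1) + 1)) :=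
    Flawless.of_recurrence (P := fun n => excessPoly (d + 1) (n + 1))
      (fun n => by convert excessPoly_recurrence d (n + 1) using 3 <;> ring_nf)
      (fun i hi => flawless_excessPoly_of_lt (by lia)) _
      (Nat.lt_succ_iff.mp (Nat.mod_lt k hm))
  have hk := Nat.div_add_mod' k (d + 1)
  rw [hk] at hblock
  rw [hceil]
  exact hblock.mono (by lia)

end Compositions

theorem stmt_10 (k m n ℓ : ℕ) (hk : 2 ≤ k) (hm : 2 ≤ m)
    (hn : k + (k + m - 1) / m ≤ n)
    (hℓ1 : (k + m - 1) / m ≤ ℓ) (hℓ2 : ℓ ≤ (n - 1) / 2) :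
    C m k (n - ℓ) ≤ C m k ℓ := by
  rcases lt_or_ge k (n - ℓ) with hlong | hshort
  · rw [C_eq_zero_of_lt m hlong]
    exact Nat.zero_le _
  · have hcoeff : (excessPoly m k).coeff (k - (n - ℓ)) ≤ (excessPoly m k).coeff (k - ℓ) :=
      flawless_excessPoly (by lia) k (by lia) (by lia)
    rwa [coeff_excessPoly, coeff_excessPoly, if_pos (Nat.sub_le _ _), if_pos (Nat.sub_le _ _),
      Nat.sub_sub_self hshort, Nat.sub_sub_self (by lia)] at hcoeff
end

section
/- Let k, m, n be positive integers with k ≥ 2 and n ≥ k + ⌈k/m⌉. If 𝓐 is an intersecting family of k-multisets from [n] in which each element appears at most m times, then |𝓐| ≤ |𝓕|, where 𝓕 is the family of all such k-multisets containing the element 1. -/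
attribute [local instance] Classical.propDecidable

/-- `f : Fin n → Fin (m+1)` is a `k`-multiset of `[n]_m`: each element appears
`f i ≤ m` times and the total size is `k`. -/
def IsKMultiset {n m : ℕ} (k : ℕ) (f : Fin n → Fin (m + 1)) : Prop :=
  ∑ i, (f i : ℕ) = k

/-- Two multisets intersect: they share a common element. -/
def MIntersect {n m : ℕ} (f g : Fin n → Fin (m + 1)) : Prop :=
  ∃ i, 1 ≤ (f i : ℕ) ∧ 1 ≤ (g i : ℕ)

/-!
Replacing each multiset by its support turns the problem into a weighted Erdős–Ko–Rado problem for
subsets of `[n]`: an `s`-set has weight `c s`, the number of compositions of `k` into `s` parts of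
size at most `m`. Pair the sizes `s ≤ t` with `s + t = n`. An intersecting family has at most as
many `s`-sets as a star by Erdős–Ko–Rado, and at most as many `s`- and `t`-sets together because it
never contains a set and its complement. So stars are optimal as soon as `c t ≤ c s` for all such
pairs.

This inequality holds because `∑ c s * X ^ s` is a sum of chains `X ^ b + ⋯ + X ^ (b + L)` with
`2 * b + L ≤ k + ⌈k/m⌉ ≤ n`: a chain meeting size `t` then also meets size `s`. Sums of such chains
are closed under products, with the bounds on `2 * b + L` adding up, and cutting a composition of
`k > m` at `m` expresses its generating polynomial through products of earlier ones.
-/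

namespace BoundedMultiset

open Finset Polynomial
open scoped FinsetFamily Pointwise

section WeightedErdosKoRado

variable {α : Type*} [Fintype α] {s t : ℕ}

/-- The full star centred at `x`, i.e. the family of all sets containing `x`: the extremal
intersecting family. -/
noncomputable def fullStar (x : α) : Finset (Finset α) := {S | x ∈ S}

lemma mem_fullStar {x : α} {S : Finset α} : S ∈ fullStar x ↔ x ∈ S := by
  simp [fullStar]

lemma card_slice_add_card_slice_le_choose {𝒜 : Finset (Finset α)}
    (h𝒜 : (𝒜 : Set (Finset α)).Intersecting) (hst : s + t = Fintype.card α) :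
    #(𝒜 # s) + #(𝒜 # t) ≤ (Fintype.card α).choose s := by
  have hdisj : Disjoint (𝒜 # s) ((𝒜 # t).image compl) := by
    rw [disjoint_left]
    intro S hS hS'
    obtain ⟨T, hT, rfl⟩ := mem_image.1 hS'
    exact h𝒜.compl_notMem (slice_subset hT) (slice_subset hS)
  have hsub : 𝒜 # s ∪ (𝒜 # t).image compl ⊆ powersetCard s univ := by
    intro S hS
    rw [mem_powersetCard_univ]
    rcases mem_union.1 hS with hS | hS
    · exact (mem_slice.1 hS).2
    · obtain ⟨T, hT, rfl⟩ := mem_image.1 hS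
      rw [card_compl, (mem_slice.1 hT).2]
      omega
  calc #(𝒜 # s) + #(𝒜 # t) = #(𝒜 # s ∪ (𝒜 # t).image compl) := by
        rw [card_union_of_disjoint hdisj, card_image_of_injective _ compl_injective]
    _ ≤ #(powersetCard s (univ : Finset α)) := card_le_card hsub
    _ = (Fintype.card α).choose s := by rw [card_powersetCard, card_univ]

lemma card_slice_fullStar_add_card_slice_fullStar (x : α) (hst : s + t = Fintype.card α) :
    #((fullStar x) # s) + #((fullStar x) # t) = (Fintype.card α).choose s := by
  have hs : (fullStar x) # s = {S ∈ powersetCard s (univ : Finset α) | x ∈ S} := by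
    ext S
    simp [mem_slice, mem_fullStar, and_comm]
  have ht : #((fullStar x) # t) = #{S ∈ powersetCard s (univ : Finset α) | x ∉ S} := by
    refine card_nbij' compl compl ?_ ?_ (fun S _ ↦ compl_compl S) (fun S _ ↦ compl_compl S)
    all_goals
      intro S hS
      simp only [coe_filter, mem_coe, Set.mem_ofPred_eq, mem_powersetCard_univ, mem_slice,
        mem_fullStar, mem_compl, card_compl] at hS ⊢
      grind
  rw [hs, ht, card_filter_add_card_filter_not, card_powersetCard, card_univ]

lemma card_slice_succ_fullStar (x : α) (s : ℕ) :
    #((fullStar x) # (s + 1)) = (Fintype.card α - 1).choose s := by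
  have hstar : (fullStar x) # (s + 1) = {S ∈ powersetCard (s + 1) (univ : Finset α) | {x} ⊆ S} := by
    ext S
    simp [mem_slice, mem_fullStar, and_comm]
  rw [hstar, card_filter_powersetCard_subset _ _ _ (subset_univ _) (by simp)]
  simp

lemma sum_card_eq_sum_antidiagonal {R : Type*} [NonAssocSemiring R] (𝒜 : Finset (Finset α))
    (w : ℕ → R) :
    ∑ S ∈ 𝒜, w #S = ∑ p ∈ antidiagonal (Fintype.card α), #(𝒜 # p.1) * w p.1 := by
  have hmaps : ∀ S ∈ 𝒜, #S ∈ range (Fintype.card α + 1) := fun S _ ↦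
    mem_range_succ_iff.2 (card_le_univ S)
  rw [Nat.sum_antidiagonal_eq_sum_range_succ_mk, ← sum_fiberwise_of_maps_to' hmaps]
  simp [slice]

variable {n : ℕ} {𝒜 : Finset (Finset (Fin n))}

lemma card_slice_le_card_slice_fullStar (x : Fin n)
    (h𝒜 : (𝒜 : Set (Finset (Fin n))).Intersecting) (hs : s ≤ n / 2) :
    #(𝒜 # s) ≤ #((fullStar x) # s) := by
  cases s with
  | zero =>
    have hempty : 𝒜 # 0 = ∅ := by
      refine eq_empty_of_forall_notMem fun S hS ↦ ?_
      exact h𝒜.ne_bot (slice_subset hS) (card_eq_zero.1 (mem_slice.1 hS).2)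
    simp [hempty]
  | succ s =>
    rw [card_slice_succ_fullStar, Fintype.card_fin]
    exact erdos_ko_rado (h𝒜.mono (coe_subset.2 slice_subset)) sized_slice hs

lemma weighted_card_slices_le (x : Fin n) (h𝒜 : (𝒜 : Set (Finset (Fin n))).Intersecting)
    (hst : s ≤ t) (hsum : s + t = n) {u v : ℕ} (hvu : v ≤ u) :
    #(𝒜 # s) * u + #(𝒜 # t) * v ≤ #((fullStar x) # s) * u + #((fullStar x) # t) * v := by
  have hsmall : #(𝒜 # s) ≤ #((fullStar x) # s) :=
    card_slice_le_card_slice_fullStar x h𝒜 (by omega)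
  have hpair : #(𝒜 # s) + #(𝒜 # t) ≤ #((fullStar x) # s) + #((fullStar x) # t) := by
    have hcard : s + t = Fintype.card (Fin n) := by rwa [Fintype.card_fin]
    rw [card_slice_fullStar_add_card_slice_fullStar x hcard]
    exact card_slice_add_card_slice_le_choose h𝒜 hcard
  obtain ⟨d, rfl⟩ := Nat.exists_eq_add_of_le hvu
  linarith [Nat.mul_le_mul_right d hsmall, Nat.mul_le_mul_right v hpair]

theorem sum_weight_le_sum_weight_fullStar (x : Fin n) {w : ℕ → ℕ}
    (hw : ∀ s t, s ≤ t → s + t = n → w t ≤ w s)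
    (h𝒜 : (𝒜 : Set (Finset (Fin n))).Intersecting) :
    ∑ S ∈ 𝒜, w #S ≤ ∑ S ∈ fullStar x, w #S := by
  have hpair : ∀ p ∈ antidiagonal n, #(𝒜 # p.1) * w p.1 + #(𝒜 # p.2) * w p.2 ≤
      #((fullStar x) # p.1) * w p.1 + #((fullStar x) # p.2) * w p.2 := by
    rintro ⟨s, t⟩ hp
    rw [HasAntidiagonal.mem_antidiagonal] at hp
    rcases le_total s t with hst | hts
    · exact weighted_card_slices_le x h𝒜 hst hp (hw s t hst hp)
    · rw [add_comm] at hp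
      linarith [weighted_card_slices_le x h𝒜 hts hp (hw t s hts hp)]
  have hswap : ∀ ℬ : Finset (Finset (Fin n)),
      ∑ p ∈ antidiagonal n, (#(ℬ # p.1) * w p.1 + #(ℬ # p.2) * w p.2) = 2 * ∑ S ∈ ℬ, w #S := by
    intro ℬ
    rw [sum_add_distrib, sum_card_eq_sum_antidiagonal, Fintype.card_fin, two_mul]
    congr 1
    exact Nat.sum_antidiagonal_swap (f := fun p ↦ #(ℬ # p.1) * w p.1)
  have hdouble := sum_le_sum hpair
  rw [hswap, hswap] at hdouble
  omega

end WeightedErdosKoRado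

section Chains

variable {n n' : ℕ}

lemma geomSum_mul_geomSum {R : Type*} [CommSemiring R] (x : R) (a b : ℕ) :
    (∑ i ∈ range (a + 2), x ^ i) * ∑ i ∈ range (b + 2), x ^ i =
      ∑ i ∈ range (a + b + 3), x ^ i +
        x * ((∑ i ∈ range (a + 1), x ^ i) * ∑ i ∈ range (b + 1), x ^ i) := by
  induction b with
  | zero =>
    simp only [sum_range_succ]
    ring
  | succ b ih =>
    rw [sum_range_succ _ (b + 2), mul_add, ih, sum_range_succ _ (b + 1),
      show a + (b + 1) + 3 = a + b + 3 + 1 by ring, sum_range_succ _ (a + b + 3),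
      sum_range_succ _ (a + 1)]
    ring

/-- The rank generating polynomial `X ^ b + ⋯ + X ^ (b + L)` of a saturated chain occupying the
ranks from `b` to `b + L` of a graded poset. -/
noncomputable def chainPoly (b L : ℕ) : ℕ[X] := X ^ b * ∑ i ∈ range (L + 1), X ^ i

lemma coeff_chainPoly (b L s : ℕ) :
    (chainPoly b L).coeff s = if b ≤ s ∧ s ≤ b + L then 1 else 0 := by
  simp only [chainPoly, coeff_X_pow_mul', finsetSum_coeff, coeff_X_pow, sum_ite_eq, mem_range]
  grind

/-- The polynomials that are rank generating functions of disjoint unions of chains centred at or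
below rank `n / 2`. -/
noncomputable def lowChainSums (n : ℕ) : AddSubmonoid ℕ[X] :=
  AddSubmonoid.closure {p | ∃ b L, 2 * b + L ≤ n ∧ chainPoly b L = p}

lemma chainPoly_mem_lowChainSums {b L : ℕ} (h : 2 * b + L ≤ n) :
    chainPoly b L ∈ lowChainSums n :=
  AddSubmonoid.subset_closure ⟨b, L, h, rfl⟩

lemma lowChainSums_mono : Monotone lowChainSums := fun _ _ h ↦
  AddSubmonoid.closure_mono fun _ ⟨b, L, hbL, hp⟩ ↦ ⟨b, L, hbL.trans h, hp⟩

lemma one_mem_lowChainSums : (1 : ℕ[X]) ∈ lowChainSums n := by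
  simpa [chainPoly] using chainPoly_mem_lowChainSums (n := n) (b := 0) (L := 0) (by simp)

lemma X_mem_lowChainSums : (X : ℕ[X]) ∈ lowChainSums 2 := by
  simpa [chainPoly] using chainPoly_mem_lowChainSums (n := 2) (b := 1) (L := 0) le_rfl

lemma one_add_X_mem_lowChainSums : (1 + X : ℕ[X]) ∈ lowChainSums 1 := by
  simpa [chainPoly, sum_range_succ] using
    chainPoly_mem_lowChainSums (n := 1) (b := 0) (L := 1) le_rfl

-- A product of two chains peels into nested chains with the same centre.
lemma chainPoly_mul_chainPoly_mem_lowChainSums (b b' L L' : ℕ) :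
    chainPoly b L * chainPoly b' L' ∈ lowChainSums (2 * b + L + (2 * b' + L')) := by
  induction L generalizing b L' with
  | zero =>
    have hprod : chainPoly b 0 * chainPoly b' L' = chainPoly (b + b') L' := by
      simp only [chainPoly, zero_add, sum_range_one]
      ring
    rw [hprod]
    exact chainPoly_mem_lowChainSums (by omega)
  | succ L ih =>
    cases L' with
    | zero =>
      have hprod : chainPoly b (L + 1) * chainPoly b' 0 = chainPoly (b + b') (L + 1) := by
        simp only [chainPoly, zero_add, sum_range_one]
        ring
      rw [hprod]
      exact chainPoly_mem_lowChainSums (by omega)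
    | succ L' =>
      have hprod : chainPoly b (L + 1) * chainPoly b' (L' + 1) =
          chainPoly (b + b') (L + L' + 2) + chainPoly (b + 1) L * chainPoly b' L' := by
        calc chainPoly b (L + 1) * chainPoly b' (L' + 1)
            = X ^ (b + b') *
                ((∑ i ∈ range (L + 2), X ^ i) * ∑ i ∈ range (L' + 2), X ^ i) := by
              simp only [chainPoly]
              ring
          _ = chainPoly (b + b') (L + L' + 2) + chainPoly (b + 1) L * chainPoly b' L' := by
              rw [geomSum_mul_geomSum]
              simp only [chainPoly]
              ring
      rw [hprod]
      exact add_mem (chainPoly_mem_lowChainSums (by omega))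
        (lowChainSums_mono (by omega) (ih (b + 1) L'))

lemma mul_mem_lowChainSums {p q : ℕ[X]} (hp : p ∈ lowChainSums n) (hq : q ∈ lowChainSums n') :
    p * q ∈ lowChainSums (n + n') := by
  have hle : lowChainSums n * lowChainSums n' ≤ lowChainSums (n + n') := by
    conv_lhs => rw [lowChainSums, lowChainSums, AddSubmonoid.closure_mul_closure]
    rw [AddSubmonoid.closure_le]
    rintro _ ⟨_, ⟨b, L, hbL, rfl⟩, _, ⟨b', L', hbL', rfl⟩, rfl⟩
    exact lowChainSums_mono (by omega) (chainPoly_mul_chainPoly_mem_lowChainSums b b' L L')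
  exact hle (AddSubmonoid.mul_mem_mul hp hq)

lemma coeff_le_coeff_of_mem_lowChainSums {p : ℕ[X]} (hp : p ∈ lowChainSums n) {s t : ℕ}
    (hst : s ≤ t) (hn : n ≤ s + t) : p.coeff t ≤ p.coeff s := by
  induction hp using AddSubmonoid.closure_induction with
  | zero => simp
  | add p q _ _ hp hq =>
    simp only [coeff_add]
    exact add_le_add hp hq
  | mem p hp =>
    obtain ⟨b, L, hbL, rfl⟩ := hp
    simp only [coeff_chainPoly]
    split_ifs <;> omega

end Chains

section Renewal

lemma sum_antidiagonal_add_succ {M : Type*} [AddCommMonoid M] (f : ℕ × ℕ → M) (a b : ℕ) :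
    ∑ p ∈ antidiagonal (a + 1 + b), f p =
      ∑ p ∈ antidiagonal a, f (p.1, p.2 + (b + 1)) +
        ∑ p ∈ antidiagonal b, f (a + 1 + p.1, p.2) := by
  simp only [Nat.sum_antidiagonal_eq_sum_range_succ_mk]
  rw [show (a + 1 + b).succ = a + 1 + (b + 1) by omega, sum_range_add]
  congr 1
  · refine sum_congr rfl fun i hi ↦ ?_
    have hia : i < a + 1 := mem_range.1 hi
    rw [show a + 1 + b - i = a - i + (b + 1) by omega]
  · refine sum_congr rfl fun i _ ↦ ?_
    rw [show a + 1 + b - (a + 1 + i) = b - i by omega]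

variable {R : Type*} [Semiring R]

lemma sum_antidiagonal_mul_assoc (f g h : ℕ → R) (n : ℕ) :
    ∑ p ∈ antidiagonal n, (∑ q ∈ antidiagonal p.1, f q.1 * g q.2) * h p.2 =
      ∑ p ∈ antidiagonal n, f p.1 * ∑ q ∈ antidiagonal p.2, g q.1 * h q.2 := by
  simpa [PowerSeries.coeff_mul] using congrArg (PowerSeries.coeff n)
    (mul_assoc (PowerSeries.mk f) (PowerSeries.mk g) (PowerSeries.mk h))

variable {c G : ℕ → R}

-- For `G` counting compositions, this splits them by the part covering the cell `a + 1`.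
lemma renewal_add_succ (hzero : G 0 = 1)
    (hsucc : ∀ k, G (k + 1) = ∑ p ∈ antidiagonal k, c p.1 * G p.2) (a b : ℕ) :
    G (a + b + 1) =
      ∑ p ∈ antidiagonal a, G p.1 * ∑ q ∈ antidiagonal b, c (p.2 + q.1) * G q.2 := by
  induction a using Nat.strong_induction_on with
  | _ a ih =>
  cases a with
  | zero => simp [hzero, hsucc]
  | succ a =>
    let tail (l : ℕ) : R := ∑ q ∈ antidiagonal b, c (l + q.1) * G q.2
    calc G (a + 1 + b + 1)
        = ∑ p ∈ antidiagonal a, c p.1 * G (p.2 + b + 1) + tail (a + 1) := by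
          rw [hsucc, sum_antidiagonal_add_succ]
          rfl
      _ = ∑ p ∈ antidiagonal a, c p.1 * ∑ q ∈ antidiagonal p.2, G q.1 * tail q.2 +
            tail (a + 1) := by
          congr 1
          refine sum_congr rfl fun p hp ↦ ?_
          rw [ih p.2 (Nat.lt_succ_of_le (HasAntidiagonal.antidiagonal.snd_le hp))]
      _ = ∑ p ∈ antidiagonal a, G (p.1 + 1) * tail p.2 + tail (a + 1) := by
          rw [← sum_antidiagonal_mul_assoc]
          simp only [hsucc]
      _ = ∑ p ∈ antidiagonal (a + 1), G p.1 * tail p.2 := by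
          rw [Nat.sum_antidiagonal_succ, hzero, one_mul, add_comm]

lemma renewal_add_two (hzero : G 0 = 1)
    (hsucc : ∀ k, G (k + 1) = ∑ p ∈ antidiagonal k, c p.1 * G p.2) (a b : ℕ) :
    G (a + b + 2) = G (a + 1) * G (b + 1) +
      ∑ p ∈ antidiagonal a, G p.1 * ∑ q ∈ antidiagonal b, c (p.2 + 1 + q.1) * G q.2 := by
  rw [show a + b + 2 = a + 1 + b + 1 by ring, renewal_add_succ hzero hsucc,
    Nat.sum_antidiagonal_succ']
  simp [hsucc b]

end Renewal

section Compositions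

variable {m k s : ℕ}

/-- The number of compositions of `k` into `s` parts of size between `1` and `m`, encoded as the
coefficient of `X ^ k` in `(X + ⋯ + X ^ m) ^ s`. -/
noncomputable def compositionCount (m s k : ℕ) : ℕ :=
  ((∑ i ∈ range m, (X : ℕ[X]) ^ (i + 1)) ^ s).coeff k

lemma compositionCount_zero_succ (m k : ℕ) : compositionCount m 0 (k + 1) = 0 := by
  simp [compositionCount, coeff_one]

lemma sum_pow_succ_eq_X_mul (m : ℕ) :
    ∑ i ∈ range m, (X : ℕ[X]) ^ (i + 1) = X * ∑ i ∈ range m, X ^ i := by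
  simp only [mul_sum, pow_succ']

lemma compositionCount_of_lt (h : k < s) : compositionCount m s k = 0 := by
  rw [compositionCount, sum_pow_succ_eq_X_mul, mul_pow, coeff_X_pow_mul', if_neg h.not_ge]

lemma compositionCount_succ_succ (m s k : ℕ) :
    compositionCount m (s + 1) (k + 1) =
      ∑ p ∈ antidiagonal k, if p.1 < m then compositionCount m s p.2 else 0 := by
  rw [compositionCount, pow_succ']
  nth_rw 1 [sum_pow_succ_eq_X_mul]
  rw [mul_assoc, coeff_X_mul, coeff_mul]
  simp [compositionCount, coeff_X_pow]

/-- The generating polynomial of the compositions of `k` into parts of size at most `m`, counted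
by their number of parts. -/
noncomputable def compositionPoly (m k : ℕ) : ℕ[X] :=
  ∑ s ∈ range (k + 1), monomial s (compositionCount m s k)

lemma coeff_compositionPoly (m k s : ℕ) :
    (compositionPoly m k).coeff s = compositionCount m s k := by
  simp only [compositionPoly, finsetSum_coeff, coeff_monomial, sum_ite_eq', mem_range]
  split_ifs with hs
  · rfl
  · exact (compositionCount_of_lt (by omega)).symm

lemma compositionPoly_zero (m : ℕ) : compositionPoly m 0 = 1 := by
  simp [compositionPoly, compositionCount]

lemma compositionPoly_succ (m k : ℕ) :
    compositionPoly m (k + 1) =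
      ∑ p ∈ antidiagonal k, (if p.1 < m then X else 0) * compositionPoly m p.2 := by
  ext s
  rw [coeff_compositionPoly, finsetSum_coeff]
  cases s with
  | zero =>
    rw [compositionCount_zero_succ]
    refine (sum_eq_zero fun p _ ↦ ?_).symm
    split_ifs <;> simp
  | succ s =>
    rw [compositionCount_succ_succ]
    refine sum_congr rfl fun p _ ↦ ?_
    split_ifs
    · rw [coeff_X_mul, coeff_compositionPoly]
    · simp

lemma compositionPoly_succ_of_lt (hk : k < m) :
    compositionPoly m (k + 1) = X * ∑ j ∈ range (k + 1), compositionPoly m j := by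
  rw [compositionPoly_succ, ← Nat.sum_antidiagonal_swap,
    Nat.sum_antidiagonal_eq_sum_range_succ_mk, mul_sum]
  refine sum_congr rfl fun j _ ↦ ?_
  rw [Prod.swap_prod_mk, if_pos (by omega)]

lemma compositionPoly_succ_mem_lowChainSums_of_lt (hk : k < m) :
    compositionPoly m (k + 1) ∈ lowChainSums (k + 2) := by
  induction k with
  | zero =>
    simpa [compositionPoly_succ_of_lt hk, compositionPoly_zero] using X_mem_lowChainSums
  | succ k ih =>
    have hrec : compositionPoly m (k + 2) = (1 + X) * compositionPoly m (k + 1) := by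
      rw [compositionPoly_succ_of_lt hk, sum_range_succ, mul_add,
        ← compositionPoly_succ_of_lt (by omega)]
      ring
    rw [hrec]
    exact lowChainSums_mono (by omega)
      (mul_mem_lowChainSums one_add_X_mem_lowChainSums (ih (by omega)))

lemma add_add_two_ceilDiv_succ (a b : ℕ) :
    (a + b + 2) ⌈/⌉ (a + 1) = (b + 1) ⌈/⌉ (a + 1) + 1 := by
  rw [Nat.ceilDiv_eq_add_pred_div, Nat.ceilDiv_eq_add_pred_div,
    show a + b + 2 + (a + 1) - 1 = b + 1 + (a + 1) - 1 + (a + 1) by omega,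
    Nat.add_div_right _ a.succ_pos]

lemma compositionPoly_mul_X_mul_mem_lowChainSums {a b i j : ℕ} (hia : i ≤ a) (hjb : j ≤ b)
    (hi : compositionPoly (a + 1) i ∈ lowChainSums (i + i ⌈/⌉ (a + 1)))
    (hj : compositionPoly (a + 1) j ∈ lowChainSums (j + j ⌈/⌉ (a + 1))) :
    compositionPoly (a + 1) i * (X * compositionPoly (a + 1) j) ∈
      lowChainSums (a + b + 2 + (a + b + 2) ⌈/⌉ (a + 1)) := by
  have hiceil : i ⌈/⌉ (a + 1) ≤ 1 := (ceilDiv_le_iff_le_mul a.succ_pos).2 (by omega)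
  have hjceil : j ⌈/⌉ (a + 1) ≤ (b + 1) ⌈/⌉ (a + 1) := Nat.div_le_div_right (by omega)
  have hceil := add_add_two_ceilDiv_succ a b
  exact lowChainSums_mono (by omega)
    (mul_mem_lowChainSums hi (mul_mem_lowChainSums X_mem_lowChainSums hj))

-- A composition of `k > m` either breaks at `m` or has a part straddling that point.
theorem compositionPoly_mem_lowChainSums (hm : 0 < m) (k : ℕ) :
    compositionPoly m k ∈ lowChainSums (k + k ⌈/⌉ m) := by
  induction k using Nat.strong_induction_on with
  | _ k ih =>
  rcases k with _ | k
  · rw [compositionPoly_zero]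
    exact one_mem_lowChainSums
  rcases lt_or_ge k m with hkm | hmk
  · have hceil : 0 < (k + 1) ⌈/⌉ m := Nat.div_pos (by omega) hm
    exact lowChainSums_mono (by omega) (compositionPoly_succ_mem_lowChainSums_of_lt hkm)
  obtain ⟨a, rfl⟩ : ∃ a, m = a + 1 := ⟨m - 1, by omega⟩
  obtain ⟨b, rfl⟩ := Nat.exists_eq_add_of_le hmk
  rw [show a + 1 + b + 1 = a + b + 2 by ring] at ih ⊢
  rw [renewal_add_two (c := fun r ↦ if r < a + 1 then X else 0) (compositionPoly_zero _)
    (compositionPoly_succ _)]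
  refine add_mem ?_ (sum_mem fun p hp ↦ ?_)
  · have hceil := add_add_two_ceilDiv_succ a b
    exact lowChainSums_mono (by omega)
      (mul_mem_lowChainSums (compositionPoly_succ_mem_lowChainSums_of_lt a.lt_succ_self)
        (ih (b + 1) (by omega)))
  · rw [mul_sum]
    refine sum_mem fun q hq ↦ ?_
    rw [HasAntidiagonal.mem_antidiagonal] at hp hq
    split_ifs
    · exact compositionPoly_mul_X_mul_mem_lowChainSums (by omega) (by omega) (ih p.1 (by omega))
        (ih q.2 (by omega))
    · simp

theorem compositionCount_le_of_le (hm : 0 < m) {t : ℕ} (hst : s ≤ t)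
    (hk : k + k ⌈/⌉ m ≤ s + t) : compositionCount m t k ≤ compositionCount m s k := by
  simpa only [coeff_compositionPoly] using
    coeff_le_coeff_of_mem_lowChainSums (compositionPoly_mem_lowChainSums hm k) hst hk

end Compositions

section Support

variable {n m : ℕ}

/-- The underlying set of a multiset given by its multiplicities. -/
noncomputable def support (f : Fin n → Fin (m + 1)) : Finset (Fin n) := {i | 1 ≤ (f i : ℕ)}

lemma mem_support {f : Fin n → Fin (m + 1)} {i : Fin n} : i ∈ support f ↔ 1 ≤ (f i : ℕ) := by
  simp [support]

lemma intersecting_image_support {𝓐 : Finset (Fin n → Fin (m + 1))}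
    (h𝓐 : ∀ f ∈ 𝓐, ∀ g ∈ 𝓐, MIntersect f g) :
    (𝓐.image support : Set (Finset (Fin n))).Intersecting := by
  intro S hS T hT hdisj
  obtain ⟨f, hf, rfl⟩ := mem_image.1 hS
  obtain ⟨g, hg, rfl⟩ := mem_image.1 hT
  obtain ⟨i, hfi, hgi⟩ := h𝓐 f hf g hg
  exact disjoint_left.1 hdisj (mem_support.2 hfi) (mem_support.2 hgi)

lemma sum_X_pow_multiplicity (m : ℕ) (p : Prop) :
    ∑ v ∈ ({v | 1 ≤ (v : ℕ) ↔ p} : Finset (Fin (m + 1))), (X : ℕ[X]) ^ (v : ℕ) =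
      if p then ∑ i ∈ range m, X ^ (i + 1) else 1 := by
  rw [sum_filter, Fin.sum_univ_succ]
  by_cases hp : p <;> simp [hp, sum_range]

lemma card_isKMultiset_support_eq (k : ℕ) (S : Finset (Fin n)) :
    #{f : Fin n → Fin (m + 1) | IsKMultiset k f ∧ support f = S} = compositionCount m #S k := by
  have hexpand : (∑ i ∈ range m, (X : ℕ[X]) ^ (i + 1)) ^ #S =
      ∑ f : Fin n → Fin (m + 1) with support f = S, X ^ ∑ i, (f i : ℕ) := by
    calc (∑ i ∈ range m, (X : ℕ[X]) ^ (i + 1)) ^ #S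
        = ∏ i, if i ∈ S then ∑ i ∈ range m, (X : ℕ[X]) ^ (i + 1) else 1 := by
          rw [prod_ite_mem, univ_inter, prod_const]
      _ = ∏ i, ∑ v ∈ ({v | 1 ≤ (v : ℕ) ↔ i ∈ S} : Finset (Fin (m + 1))), X ^ (v : ℕ) := by
          refine prod_congr rfl fun i _ ↦ ?_
          convert (sum_X_pow_multiplicity m (i ∈ S)).symm
      _ = ∑ f : Fin n → Fin (m + 1) with support f = S, X ^ ∑ i, (f i : ℕ) := by
          rw [prod_univ_sum]
          refine sum_congr ?_ fun f _ ↦ prod_pow_eq_pow_sum _ _ _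
          ext f
          simp [Finset.ext_iff, mem_support]
  rw [compositionCount, hexpand, finsetSum_coeff]
  simp only [coeff_X_pow, ← card_filter, filter_filter, IsKMultiset, eq_comm (a := k), and_comm]

lemma card_isKMultiset_support_mem (k : ℕ) (ℱ : Finset (Finset (Fin n))) :
    #{f : Fin n → Fin (m + 1) | IsKMultiset k f ∧ support f ∈ ℱ} =
      ∑ S ∈ ℱ, compositionCount m #S k := by
  rw [card_eq_sum_card_fiberwise (f := support) (t := ℱ) (by intro f; simp)]
  refine sum_congr rfl fun S hS ↦ ?_
  rw [← card_isKMultiset_support_eq, filter_filter]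
  congr 1
  ext f
  simp only [mem_filter, mem_univ, true_and]
  grind

end Support

end BoundedMultiset

theorem stmt_15 (k m n : ℕ) (hk : 2 ≤ k) (hm : 1 ≤ m)
    (hn : k + (k + m - 1) / m ≤ n)
    (𝓐 : Finset (Fin n → Fin (m + 1)))
    (h𝓐k : ∀ f ∈ 𝓐, IsKMultiset k f)
    (h𝓐int : ∀ f ∈ 𝓐, ∀ g ∈ 𝓐, MIntersect f g) :
    𝓐.card ≤ (Finset.univ.filter
      (fun f : Fin n → Fin (m + 1) =>
        IsKMultiset k f ∧
          1 ≤ ((f ⟨0, lt_of_lt_of_le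
            (lt_of_lt_of_le (by omega) (Nat.le_add_right k ((k + m - 1) / m))) hn⟩ :
              Fin (m + 1)) : ℕ))).card := by
  generalize_proofs hpos
  have hweight : ∀ s t, s ≤ t → s + t = n →
      BoundedMultiset.compositionCount m t k ≤ BoundedMultiset.compositionCount m s k :=
    fun s t hst hsum ↦ BoundedMultiset.compositionCount_le_of_le hm hst (hsum ▸ hn)
  calc 𝓐.card
      ≤ (Finset.univ.filter fun f ↦ IsKMultiset k f ∧
          BoundedMultiset.support f ∈ 𝓐.image BoundedMultiset.support).card :=
        Finset.card_le_card fun f hf ↦ by simpa using ⟨h𝓐k f hf, f, hf, rfl⟩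
    _ = ∑ S ∈ 𝓐.image BoundedMultiset.support, BoundedMultiset.compositionCount m S.card k :=
        BoundedMultiset.card_isKMultiset_support_mem k _
    _ ≤ ∑ S ∈ BoundedMultiset.fullStar ⟨0, hpos⟩, BoundedMultiset.compositionCount m S.card k :=
        BoundedMultiset.sum_weight_le_sum_weight_fullStar _ hweight
          (BoundedMultiset.intersecting_image_support h𝓐int)
    _ = _ := by
        rw [← BoundedMultiset.card_isKMultiset_support_mem]
        simp only [BoundedMultiset.mem_fullStar, BoundedMultiset.mem_support]
end

section
/- Let k, m, n be positive integers with k ≥ 2, and suppose either (a) n > k + ⌈k/m⌉, or (b) n = k + ⌈k/m⌉ with k > m and m ∤ k. If 𝓐 is an intersecting family of k-multisets of [n]_m of maximum size, then 𝓐 is, up to a permutation of [n], the family of all k-multisets containing a fixed element. -/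
attribute [local instance] Classical.propDecidable

/-- The "star" family of all `k`-multisets of `[n]_m` containing the fixed element `x`. -/
noncomputable def star (n m k : ℕ) (x : Fin n) : Finset (Fin n → Fin (m + 1)) :=
  Finset.univ.filter (fun f => IsKMultiset k f ∧ 1 ≤ ((f x : Fin (m + 1)) : ℕ))

/-!
Group the `k`-multisets of `[n]_m` by their supports. The number with a given support of size `s`
is the number of compositions of `k` into `s` parts of size at most `m`. For `s ≤ t` with
`s + t ≥ k + ⌈k/m⌉` there are at least as many compositions into `s` parts as into `t`, so sizes
`s ≤ n / 2` weigh at least as much as `n - s`, and size `c = ⌈k/m⌉` weighs strictly more than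
`n - c`.

An intersecting family of supports has at most as many members of size `s ≤ n / 2` as a star
(Erdős–Ko–Rado), and, as it never contains both a set and its complement, at most as many members
of sizes `s` and `n - s` together. A family of maximum weight must therefore attain the
Erdős–Ko–Rado bound at size `c`. Since `2 * c < n`, Katona's circle argument shows that its members
of size `c` are all the `c`-sets through some `x`: every cyclic order contains exactly `c` of them
as arcs, and these arcs are consecutive. A support missing `x` has at most `k ≤ n - c` elements,
hence would be disjoint from one of those `c`-sets.
-/

section Compositions

open Finset Polynomial

/-- The generating polynomial `X + X ^ 2 + ⋯ + X ^ m` of a single part of size at most `m`. -/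
noncomputable def partPoly (m : ℕ) : ℕ[X] := ∑ i ∈ range m, X ^ (i + 1)

/-- The number of compositions of `k` into `s` parts, each of size at most `m`, encoded as a
coefficient of the generating polynomial. -/
noncomputable def compCount (m s k : ℕ) : ℕ := (partPoly m ^ s).coeff k

/-- The number of compositions of `k` into a first part of size at most `p` followed by `s` parts
of size at most `m`. -/
noncomputable def headCompCount (m p s k : ℕ) : ℕ := (partPoly p * partPoly m ^ s).coeff k

variable {m p s t k : ℕ}

lemma coeff_partPoly : (partPoly p).coeff k = if 1 ≤ k ∧ k ≤ p then 1 else 0 := by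
  simp only [partPoly, finsetSum_coeff, coeff_X_pow]
  split_ifs with hk
  · rw [sum_eq_single_of_mem (k - 1) (mem_range.2 (by omega)) fun i _ hi => if_neg (by omega)]
    exact if_pos (by omega)
  · exact sum_eq_zero fun i hi => if_neg (by rw [mem_range] at hi; omega)

lemma partPoly_succ (p : ℕ) : partPoly (p + 1) = X * (partPoly p + 1) := by
  simp only [partPoly, sum_range_succ', mul_add, mul_sum, pow_succ', pow_zero]

lemma compCount_zero_left (m k : ℕ) : compCount m 0 k = if k = 0 then 1 else 0 := by
  simp [compCount, coeff_one]

lemma compCount_succ (m s k : ℕ) : compCount m (s + 1) k = headCompCount m m s k := by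
  rw [compCount, headCompCount, pow_succ']

lemma headCompCount_eq_sum (m p s k : ℕ) :
    headCompCount m p s k =
      ∑ i ∈ range p, if i + 1 ≤ k then compCount m s (k - (i + 1)) else 0 := by
  simp only [headCompCount, partPoly, sum_mul, finsetSum_coeff, coeff_X_pow_mul', compCount]

lemma headCompCount_zero_right (m p s : ℕ) : headCompCount m p s 0 = 0 := by
  simp [headCompCount_eq_sum]

-- The first part is either `1`, or it stays positive when lowered by `1`.
lemma headCompCount_succ_succ (m p s k : ℕ) :
    headCompCount m (p + 1) s (k + 1) = headCompCount m p s k + compCount m s k := by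
  rw [headCompCount, partPoly_succ, mul_assoc, coeff_X_mul, add_mul, one_mul, coeff_add,
    headCompCount, compCount]

lemma compCount_succ_eq_headCompCount_add_sum (hp : p ≤ m) (s k : ℕ) :
    compCount m (s + 1) k = headCompCount m p s k +
      ∑ i ∈ Ico p m, if i + 1 ≤ k then compCount m s (k - (i + 1)) else 0 := by
  rw [compCount_succ, headCompCount_eq_sum, headCompCount_eq_sum,
    sum_range_add_sum_Ico _ hp]

lemma compCount_eq_zero_of_lt : ∀ {s k : ℕ}, k < s → compCount m s k = 0
  | s + 1, k, hk => by
    rw [compCount_succ, headCompCount_eq_sum]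
    refine sum_eq_zero fun i _ => ?_
    split_ifs
    · exact compCount_eq_zero_of_lt (by omega)
    · rfl

lemma headCompCount_eq_zero_of_le (hk : k ≤ s) : headCompCount m p s k = 0 := by
  rw [headCompCount_eq_sum]
  refine sum_eq_zero fun i _ => ?_
  split_ifs
  · exact compCount_eq_zero_of_lt (by omega)
  · rfl

lemma headCompCount_succ_self (m p s : ℕ) :
    headCompCount m (p + 1) s (s + 1) = compCount m s s := by
  rw [headCompCount_succ_succ, headCompCount_eq_zero_of_le le_rfl, zero_add]

lemma compCount_self_le_one (m s : ℕ) : compCount m s s ≤ 1 := by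
  induction s with
  | zero => simp [compCount_zero_left]
  | succ s ih =>
    rw [compCount_succ]
    cases m with
    | zero => simp [headCompCount_eq_sum]
    | succ m => rwa [headCompCount_succ_self]

lemma compCount_pos : ∀ {s k : ℕ}, s ≤ k → k ≤ s * m → 0 < compCount m s k
  | 0, k, _, hkm => by simp [compCount_zero_left, show k = 0 by omega]
  | s + 1, k, hsk, hkm => by
    rw [Nat.succ_mul] at hkm
    have hm : 0 < m := Nat.pos_of_ne_zero fun h => by simp [h] at hkm; omega
    have hsm : s ≤ s * m := Nat.le_mul_of_pos_right s hm
    -- `i + 1` is the smallest first part leaving a remainder of at most `s * m`.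
    obtain ⟨i, him, hsi, hik⟩ : ∃ i < m, s + (i + 1) ≤ k ∧ k ≤ s * m + (i + 1) :=
      ⟨k - s * m - 1, by omega, by omega, by omega⟩
    rw [compCount_succ, headCompCount_eq_sum]
    refine sum_pos' (fun _ _ => Nat.zero_le _) ⟨i, mem_range.2 him, ?_⟩
    rw [if_pos (by omega)]
    exact compCount_pos (by omega) (by omega)

lemma one_lt_compCount (hs : 2 ≤ s) (hsk : s < k) (hkm : k < s * m) : 1 < compCount m s k := by
  obtain ⟨s, rfl⟩ : ∃ r, s = r + 1 := ⟨s - 1, by omega⟩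
  rw [Nat.succ_mul] at hkm
  have hm : 2 ≤ m := by
    by_contra! hm
    have : s * m ≤ s * 1 := Nat.mul_le_mul_left s (by omega)
    omega
  have hsm : s * 2 ≤ s * m := Nat.mul_le_mul_left s hm
  obtain ⟨i, him, hsi, hik⟩ : ∃ i, i + 1 < m ∧ s + (i + 2) ≤ k ∧ k ≤ s * m + (i + 1) :=
    ⟨k - s * m - 1, by omega, by omega, by omega⟩
  rw [compCount_succ, headCompCount_eq_sum]
  calc 1 < compCount m s (k - (i + 1)) + compCount m s (k - (i + 1 + 1)) := by
        have := compCount_pos (m := m) (s := s) (k := k - (i + 1)) (by omega) (by omega)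
        have := compCount_pos (m := m) (s := s) (k := k - (i + 1 + 1)) (by omega) (by omega)
        omega
    _ = ∑ j ∈ {i, i + 1}, if j + 1 ≤ k then compCount m s (k - (j + 1)) else 0 := by
        rw [sum_pair (by omega), if_pos (by omega), if_pos (by omega)]
    _ ≤ _ := sum_le_sum_of_subset fun j => by
        simp only [mem_insert, mem_singleton, mem_range]
        omega

lemma add_self_ceilDiv (hm : 0 < m) (k : ℕ) : (k + m) ⌈/⌉ m = k ⌈/⌉ m + 1 := by
  rw [Nat.ceilDiv_eq_add_pred_div, Nat.ceilDiv_eq_add_pred_div,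
    show k + m + m - 1 = k + m - 1 + m by omega, Nat.add_div_right _ hm]

lemma ceilDiv_le_ceilDiv (hm : 0 < m) {a b : ℕ} (hab : a ≤ b) : a ⌈/⌉ m ≤ b ⌈/⌉ m :=
  (gc_mul_ceilDiv hm).monotone_l hab

lemma ceilDiv_pos (hm : 0 < m) (hk : 0 < k) : 0 < k ⌈/⌉ m := by
  rw [Nat.ceilDiv_eq_add_pred_div]
  exact Nat.div_pos (by omega) hm

lemma headCompCount_le_headCompCount_zero (hp : 1 ≤ p) (hpm : p ≤ m)
    (h : k + (k + (m - p)) ⌈/⌉ m ≤ t + 2) : headCompCount m p t k ≤ headCompCount m p 0 k := by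
  rcases Nat.lt_or_ge t k with htk | hkt
  · have hceil : 0 < (k + (m - p)) ⌈/⌉ m := ceilDiv_pos (by omega) (by omega)
    obtain rfl : k = t + 1 := by omega
    have hkp : t + 1 ≤ p := by
      have : (t + 1 + (m - p)) ⌈/⌉ m ≤ 1 := by omega
      rw [ceilDiv_le_iff_le_mul (by omega)] at this
      omega
    obtain ⟨q, rfl⟩ : ∃ q, p = q + 1 := ⟨p - 1, by omega⟩
    rw [headCompCount_succ_self, headCompCount, pow_zero, mul_one, coeff_partPoly,
      if_pos ⟨by omega, hkp⟩]
    exact compCount_self_le_one m t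
  · rw [headCompCount_eq_zero_of_le hkt]
    exact Nat.zero_le _

/-- A composition count of `k` is at least as large on `s` parts as on `t ≥ s` parts once `s + t`
reaches `k + k ⌈/⌉ m`, the sum of the extreme numbers of parts possible. -/
def PrefersFewerParts (m k : ℕ) : Prop :=
  ∀ ⦃s t⦄, s ≤ t → k + k ⌈/⌉ m ≤ s + t → compCount m t k ≤ compCount m s k

/-- The analogue of `PrefersFewerParts` for compositions whose first part is at most `p`. They have
`s + 1` and `t + 1` parts, and the extreme numbers of parts are `(k + (m - p)) ⌈/⌉ m` and `k`. -/
def HeadPrefersFewerParts (m k : ℕ) : Prop :=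
  ∀ ⦃p s t⦄, 1 ≤ p → p ≤ m → s ≤ t → k + (k + (m - p)) ⌈/⌉ m ≤ s + t + 2 →
    headCompCount m p t k ≤ headCompCount m p s k

lemma PrefersFewerParts.of_head (hm : 0 < m) (h : HeadPrefersFewerParts m k) :
    PrefersFewerParts m k := by
  intro s t hst hsum
  rcases s, t with ⟨_ | s, _ | t⟩
  · exact le_rfl
  · rw [compCount_eq_zero_of_lt]
    · exact Nat.zero_le _
    · rcases Nat.eq_zero_or_pos k with rfl | hk
      · omega
      · have := ceilDiv_pos hm hk
        omega
  · omega
  · rw [compCount_succ, compCount_succ]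
    exact h hm le_rfl (by omega) (by rw [Nat.sub_self, add_zero]; omega)

lemma headPrefersFewerParts_zero (m : ℕ) : HeadPrefersFewerParts m 0 := by
  intro p s t _ _ _ _
  rw [headCompCount_zero_right, headCompCount_zero_right]

lemma sum_compCount_tail_le (hp : 1 ≤ p) (hpm : p ≤ m)
    (hcomp : ∀ j < k, PrefersFewerParts m j) (hst : s ≤ t)
    (hsum : k + (k + (m - p)) ⌈/⌉ m ≤ s + t + 3) :
    (∑ i ∈ Ico p m, if i + 1 ≤ k then compCount m t (k - (i + 1)) else 0) ≤
      ∑ i ∈ Ico p m, if i + 1 ≤ k then compCount m s (k - (i + 1)) else 0 := by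
  refine sum_le_sum fun i hi => ?_
  obtain ⟨hpi, -⟩ := mem_Ico.1 hi
  split_ifs with hik
  · have hceil : (k - (i + 1)) ⌈/⌉ m + 1 ≤ (k + (m - p)) ⌈/⌉ m := by
      rw [← add_self_ceilDiv (by omega)]
      exact ceilDiv_le_ceilDiv (by omega) (by omega)
    exact hcomp _ (by omega) hst (by omega)
  · exact le_rfl

lemma headPrefersFewerParts_succ (hhead : HeadPrefersFewerParts m k)
    (hcomp : ∀ j ≤ k, PrefersFewerParts m j) : HeadPrefersFewerParts m (k + 1) := by
  intro p s t hp hpm hst hsum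
  rcases s with _ | s
  · exact headCompCount_le_headCompCount_zero hp hpm (by omega)
  rcases hst.eq_or_lt with rfl | hst
  · exact le_rfl
  obtain ⟨p, rfl⟩ : ∃ q, p = q + 1 := ⟨p - 1, by omega⟩
  obtain ⟨t, rfl⟩ : ∃ r, t = r + 1 := ⟨t - 1, by omega⟩
  rw [show k + 1 + (m - (p + 1)) = k + (m - p) by omega] at hsum
  rw [headCompCount_succ_succ, headCompCount_succ_succ]
  rcases Nat.eq_zero_or_pos p with rfl | hp
  · rw [Nat.sub_zero, add_self_ceilDiv hpm] at hsum
    simpa [headCompCount_eq_sum] using hcomp k le_rfl hst.le (by omega)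
  · have hpm : p ≤ m := by omega
    -- Expanding both unrestricted counts makes the two restricted ones comparable crosswise.
    rw [compCount_succ_eq_headCompCount_add_sum hpm, compCount_succ_eq_headCompCount_add_sum hpm]
    have hfar : headCompCount m p (t + 1) k ≤ headCompCount m p s k :=
      hhead hp hpm (by omega) (by omega)
    have hnear : headCompCount m p t k ≤ headCompCount m p (s + 1) k :=
      hhead hp hpm (by omega) (by omega)
    have htail := sum_compCount_tail_le hp hpm (fun j hj => hcomp j hj.le)
      (show s ≤ t by omega) (by omega)
    omega

lemma headPrefersFewerParts (m k : ℕ) : HeadPrefersFewerParts m k := by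
  induction k using Nat.strong_induction_on with
  | _ k ih =>
    rcases k with _ | k
    · exact headPrefersFewerParts_zero m
    · intro p s t hp hpm
      exact headPrefersFewerParts_succ (ih k k.lt_succ_self)
        (fun j hj => .of_head (by omega) (ih j (by omega))) hp hpm

theorem compCount_le_compCount (hm : 0 < m) (hst : s ≤ t) (hsum : k + k ⌈/⌉ m ≤ s + t) :
    compCount m t k ≤ compCount m s k :=
  PrefersFewerParts.of_head hm (headPrefersFewerParts m k) hst hsum

lemma ceilDiv_le_self (hm : 0 < m) (k : ℕ) : k ⌈/⌉ m ≤ k :=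
  (ceilDiv_le_iff_le_mul hm).2 (Nat.le_mul_of_pos_left k hm)

lemma le_ceilDiv_mul (hm : 0 < m) (k : ℕ) : k ≤ k ⌈/⌉ m * m :=
  mul_comm m (k ⌈/⌉ m) ▸ (ceilDiv_le_iff_le_mul hm).1 le_rfl

lemma compCount_lt_compCount_ceilDiv_of_lt (hm : 0 < m) (hkt : k < t) :
    compCount m t k < compCount m (k ⌈/⌉ m) k := by
  rw [compCount_eq_zero_of_lt hkt]
  exact compCount_pos (ceilDiv_le_self hm k) (le_ceilDiv_mul hm k)

lemma compCount_self_lt_compCount_ceilDiv (hm : 0 < m) (hmk : m < k) (hdvd : ¬ m ∣ k) :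
    compCount m k k < compCount m (k ⌈/⌉ m) k := by
  have hceil : 1 < k ⌈/⌉ m := by
    rw [← not_le, ceilDiv_le_iff_le_mul hm]
    omega
  have hm' : 2 ≤ m := by
    by_contra! h
    exact hdvd ((show m = 1 by omega) ▸ one_dvd k)
  have hlt : k ⌈/⌉ m < k := by
    have : k ⌈/⌉ m ≤ k - 1 := by
      rw [ceilDiv_le_iff_le_mul hm]
      have := Nat.mul_le_mul_right (k - 1) hm'
      omega
    omega
  have hlt_mul : k < k ⌈/⌉ m * m :=
    (le_ceilDiv_mul hm k).lt_of_ne fun h => hdvd ⟨k ⌈/⌉ m, h.trans (mul_comm _ _)⟩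
  exact (compCount_self_le_one m k).trans_lt (one_lt_compCount hceil hlt hlt_mul)

end Compositions

section CyclicallyClose

open Finset

/-- The starting points in `T ⊆ {0, …, n - 1}` are pairwise at cyclic distance less than `s`, i.e.
the arcs of length `s` starting there on a circle of length `n` meet pairwise. -/
def CyclicallyClose (n s : ℕ) (T : Finset ℕ) : Prop :=
  ∀ a ∈ T, ∀ b ∈ T, a ≤ b → b < a + s ∨ a + n < b + s

/-- The map identifying the starting points `i + e` and `i + e - s` of two consecutive arcs on a
circle of length `n`, both being sent to `e`, for `e < s`. -/
def wrapOffset (n s i a : ℕ) : ℕ := if a < i + s then a - i else a + s - (i + n)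

variable {n s i : ℕ} {T : Finset ℕ}

lemma CyclicallyClose.mapsTo_wrapOffset (hT : CyclicallyClose n s T) (hTn : T ⊆ range n)
    (hi : i ∈ T) (hmin : ∀ a ∈ T, i ≤ a) : Set.MapsTo (wrapOffset n s i) T (range s) := by
  intro a ha
  have := hT i hi i hi le_rfl
  have := hT i hi a ha (hmin a ha)
  have := mem_range.1 (hTn ha)
  simp only [wrapOffset, coe_range, Set.mem_Iio]
  split_ifs <;> omega

lemma CyclicallyClose.injOn_wrapOffset (hT : CyclicallyClose n s T) (hsn : 2 * s ≤ n)
    (hi : i ∈ T) (hmin : ∀ a ∈ T, i ≤ a) : Set.InjOn (wrapOffset n s i) T := by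
  intro a ha b hb hab
  have := hmin a ha
  have := hmin b hb
  have := hT i hi a ha (hmin a ha)
  have := hT i hi b hb (hmin b hb)
  have := hT a ha b hb
  have := hT b hb a ha
  simp only [wrapOffset] at hab
  split_ifs at hab <;> omega

lemma CyclicallyClose.card_le (hT : CyclicallyClose n s T) (hTn : T ⊆ range n)
    (hsn : 2 * s ≤ n) : #T ≤ s := by
  rcases T.eq_empty_or_nonempty with rfl | hne
  · exact Nat.zero_le _
  · have hi := T.min'_mem hne
    have hmin : ∀ a ∈ T, T.min' hne ≤ a := fun a ha => T.min'_le a ha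
    simpa using card_le_card_of_injOn _ (hT.mapsTo_wrapOffset hTn hi hmin)
      (hT.injOn_wrapOffset hsn hi hmin)

lemma CyclicallyClose.mem_or_mem_of_card_eq (hT : CyclicallyClose n s T) (hTn : T ⊆ range n)
    (hsn : 2 * s ≤ n) (hcard : #T = s) (h0 : 0 ∈ T) {e : ℕ} (he : 1 ≤ e) (hes : e < s) :
    e ∈ T ∨ n - s + e ∈ T := by
  have hmin : ∀ a ∈ T, 0 ≤ a := fun a _ => a.zero_le
  obtain ⟨a, ha, hae⟩ := surjOn_of_injOn_of_card_le _ (hT.mapsTo_wrapOffset hTn h0 hmin)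
    (hT.injOn_wrapOffset hsn h0 hmin) (by rw [card_range, hcard]) (mem_coe.2 (mem_range.2 hes))
  simp only [wrapOffset] at hae
  split_ifs at hae
  · exact .inl (by rwa [← hae, Nat.sub_zero])
  · exact .inr (by rwa [show n - s + e = a by omega])

lemma CyclicallyClose.mem_of_card_eq (hT : CyclicallyClose n s T) (hTn : T ⊆ range n)
    (hsn : 2 * s < n) (hcard : #T = s) (h0 : 0 ∈ T) (h1 : 1 ∉ T) {b : ℕ} (hb : b < n)
    (hbs : n < b + s) : b ∈ T := by
  have hwrap : ∀ e, 1 ≤ e → e < s → n - s + e ∈ T := by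
    intro e he
    induction e, he using Nat.le_induction with
    | base =>
      exact fun hs => (hT.mem_or_mem_of_card_eq hTn hsn.le hcard h0 le_rfl hs).resolve_left h1
    | succ e he ih =>
      intro hes
      refine (hT.mem_or_mem_of_card_eq hTn hsn.le hcard h0 (by omega) hes).resolve_left ?_
      intro hmem
      have := hT (e + 1) hmem _ (ih (by omega)) (by omega)
      omega
  simpa [show n - s + (b + s - n) = b by omega] using hwrap (b + s - n) (by omega) (by omega)

end CyclicallyClose

section CyclicArc

open Finset Fintype
open scoped Nat

variable {α : Type*} [Fintype α]

/-- The arc of `s` consecutive elements, starting at position `j`, of the circle on which the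
numbering `f` places the elements of `α`. -/
noncomputable def cyclicArc (f : Numbering α) (s j : ℕ) : Finset α :=
  {x | j ≤ f x ∧ f x < j + s ∨ f x + card α < j + s}

/-- The positions at which an arc of length `s` belonging to `𝓕` starts. -/
noncomputable def arcStarts (𝓕 : Finset (Finset α)) (s : ℕ) (f : Numbering α) : Finset ℕ :=
  {j ∈ range (card α) | cyclicArc f s j ∈ 𝓕}

variable {𝓕 : Finset (Finset α)} {f : Numbering α} {s j : ℕ}

lemma mem_cyclicArc {x : α} :
    x ∈ cyclicArc f s j ↔ j ≤ f x ∧ f x < j + s ∨ f x + card α < j + s := by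
  simp only [cyclicArc, mem_filter_univ]

lemma mem_arcStarts : j ∈ arcStarts 𝓕 s f ↔ j < card α ∧ cyclicArc f s j ∈ 𝓕 := by
  rw [arcStarts, mem_filter, mem_range]

lemma arcStarts_subset_range : arcStarts 𝓕 s f ⊆ range (card α) := filter_subset _ _

lemma cyclicallyClose_arcStarts (h𝓕 : (𝓕 : Set (Finset α)).Intersecting) :
    CyclicallyClose (card α) s (arcStarts 𝓕 s f) := by
  intro a ha b hb hab
  rw [mem_arcStarts] at ha hb
  obtain ⟨x, hxa, hxb⟩ := not_disjoint_iff.1 (h𝓕 ha.2 hb.2)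
  rw [mem_cyclicArc] at hxa hxb
  omega

lemma val_sub_lt_iff_mem_cyclicArc [Nonempty α] (j : Fin (card α)) (x : α) :
    ((f x - j : Fin (card α)) : ℕ) < s ↔ x ∈ cyclicArc f s j := by
  rw [mem_cyclicArc]
  rcases le_or_gt j (f x) with h | h
  · rw [Fin.sub_val_of_le h]
    rw [Fin.le_def] at h
    omega
  · rw [Fin.coe_sub_iff_lt.2 h]
    rw [Fin.lt_def] at h
    omega

lemma card_filter_cyclicArc_eq {B : Finset α} (hj : j < card α) :
    #{f : Numbering α | cyclicArc f #B j = B} = (#B)! * (card α - #B)! := by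
  have : Nonempty α := Fintype.card_pos_iff.1 (by omega)
  let rotate := Equiv.subRight (⟨j, hj⟩ : Fin (card α))
  rw [← Numbering.card_prefixed]
  refine Finset.card_equiv ((Equiv.refl α).equivCongr rotate) fun f => ?_
  rw [mem_filter_univ, Numbering.mem_prefixed, Finset.ext_iff]
  refine forall_congr' fun x => ?_
  rw [← val_sub_lt_iff_mem_cyclicArc ⟨j, hj⟩]
  exact iff_comm

lemma sum_card_arcStarts (h𝓕 : (𝓕 : Set (Finset α)).Sized s) :
    ∑ f : Numbering α, #(arcStarts 𝓕 s f) = card α * (#𝓕 * (s ! * (card α - s)!)) := by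
  have hcount : ∀ j ∈ range (card α),
      #{f : Numbering α | cyclicArc f s j ∈ 𝓕} = #𝓕 * (s ! * (card α - s)!) := by
    intro j hj
    rw [card_eq_sum_card_fiberwise (t := 𝓕) (f := fun f => cyclicArc f s j) (by intro f; simp),
      ← smul_eq_mul, ← sum_const]
    refine sum_congr rfl fun B hB => ?_
    have hBs : #B = s := h𝓕 hB
    rw [filter_filter, ← hBs, ← card_filter_cyclicArc_eq (mem_range.1 hj)]
    congr 1
    refine filter_congr fun f _ => ⟨And.right, fun h => ⟨h.symm ▸ hB, h⟩⟩
  calc ∑ f : Numbering α, #(arcStarts 𝓕 s f)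
      = ∑ j ∈ range (card α), #{f : Numbering α | cyclicArc f s j ∈ 𝓕} := by
        simp only [arcStarts, card_filter]
        exact sum_comm
    _ = card α * (#𝓕 * (s ! * (card α - s)!)) := by
        rw [sum_congr rfl hcount, sum_const, card_range, smul_eq_mul]

lemma mul_choose_pred_mul_factorial {n : ℕ} (hs : 0 < s) (hsn : s ≤ n) :
    n * ((n - 1).choose (s - 1) * (s ! * (n - s)!)) = n ! * s := by
  obtain ⟨s, rfl⟩ : ∃ r, s = r + 1 := ⟨s - 1, by omega⟩
  obtain ⟨n, rfl⟩ : ∃ r, n = r + 1 := ⟨n - 1, by omega⟩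
  rw [← Nat.choose_mul_factorial_mul_factorial hsn, ← mul_assoc, Nat.add_sub_cancel,
    Nat.add_sub_cancel, Nat.add_one_mul_choose_eq]
  ring

lemma card_arcStarts_eq (hs : 0 < s) (hsn : 2 * s ≤ card α)
    (hsized : (𝓕 : Set (Finset α)).Sized s) (hint : (𝓕 : Set (Finset α)).Intersecting)
    (hcard : #𝓕 = (card α - 1).choose (s - 1)) (f : Numbering α) : #(arcStarts 𝓕 s f) = s := by
  have hle : ∀ g ∈ (univ : Finset (Numbering α)), #(arcStarts 𝓕 s g) ≤ s := fun g _ =>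
    (cyclicallyClose_arcStarts hint).card_le arcStarts_subset_range hsn
  refine (sum_eq_sum_iff_of_le hle).1 ?_ f (mem_univ f)
  rw [sum_card_arcStarts hsized, hcard, mul_choose_pred_mul_factorial hs (by omega), sum_const,
    Finset.card_univ, Fintype.card_numbering, smul_eq_mul]

end CyclicArc

section ErdosKoRado

open Finset Fintype
open scoped FinsetFamily

lemma exists_exchange_notMem {α : Type*} {𝓕 : Finset (Finset α)} {s : ℕ}
    (h𝓕 : (𝓕 : Set (Finset α)).Sized s) (hne : 𝓕.Nonempty) {D : Finset α} (hD : #D = s)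
    (hD𝓕 : D ∉ 𝓕) :
    ∃ B ∈ 𝓕, ∃ x ∈ B, ∃ z ∉ B, insert z (B.erase x) ∉ 𝓕 := by
  obtain ⟨B, hB, hmin⟩ := exists_min_image 𝓕 (fun A => #(A \ D)) hne
  have hBs : #B = s := h𝓕 hB
  obtain ⟨x, hxB, hxD⟩ : ∃ x ∈ B, x ∉ D := not_subset.1 fun hBD =>
    hD𝓕 (eq_of_subset_of_card_le hBD (by omega) ▸ hB)
  obtain ⟨z, hzD, hzB⟩ : ∃ z ∈ D, z ∉ B := not_subset.1 fun hDB =>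
    hD𝓕 (eq_of_subset_of_card_le hDB (by omega) ▸ hB)
  refine ⟨B, hB, x, hxB, z, hzB, fun hmem => (hmin _ hmem).not_gt ?_⟩
  rw [insert_sdiff_of_mem _ hzD, erase_sdiff_comm]
  exact card_erase_lt_of_mem (mem_sdiff.2 ⟨hxB, hxD⟩)

variable {α : Type*} [Fintype α]

lemma exists_numbering_lt_card_iff {ι : Type*} [LinearOrder ι] (r : α → ι) :
    ∃ f : Numbering α, ∀ (a : ι) (S : Finset α),
      (∀ y, y ∈ S ↔ r y ≤ a) → ∀ y, f y < #S ↔ y ∈ S := by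
  let e := equivFin α
  let σ := Tuple.sort (r ∘ e.symm)
  refine ⟨e.trans σ.symm, fun a S hS y => ?_⟩
  have hcard : #S = #{i | ((r ∘ e.symm) ∘ σ) i ≤ a} :=
    Finset.card_equiv (e.trans σ.symm) fun y => by simp [hS]
  have hsort := Tuple.lt_card_le_iff_apply_le_of_monotone (j := σ.symm (e y)) (a := a)
    (Tuple.monotone_sort (r ∘ e.symm))
  rw [hS, hcard, ← show ((r ∘ e.symm) ∘ σ) (σ.symm (e y)) = r y by simp, ← hsort]
  simp only [Equiv.trans_apply]
  rfl

lemma exists_numbering_cyclicArc {B C : Finset α} {x z : α} (hBC : #B = #C) (hxB : x ∈ B)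
    (hxC : x ∈ C) (hzB : z ∉ B) (hzC : z ∉ C) :
    ∃ f : Numbering α, cyclicArc f #B 0 = B ∧ cyclicArc f #B 1 = insert z (B.erase x) ∧
      cyclicArc f #B (card α - #(C \ B)) = C := by
  -- On the circle: `x`, the rest of `B ∩ C`, then `B \ C`, `z`, everything else, and `C \ B`.
  let r : α → ℕ := fun y =>
    if y ∈ B then if y = x then 0 else if y ∈ C then 1 else 2
    else if y = z then 3 else if y ∈ C then 5 else 4
  obtain ⟨f, hprefix⟩ := exists_numbering_lt_card_iff r
  have h0 := hprefix 0 {x} fun y => by grind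
  have h1 := hprefix 1 (B ∩ C) fun y => by grind
  have h2 := hprefix 2 B fun y => by grind
  have h3 := hprefix 3 (insert z B) fun y => by grind
  have h4 := hprefix 4 (C \ B)ᶜ fun y => by grind [mem_compl]
  have hinter : #(B ∩ C) + #(C \ B) = #B := by
    rw [hBC, inter_comm, card_inter_add_card_sdiff]
  rw [card_singleton] at h0
  rw [card_insert_of_notMem hzB] at h3
  rw [card_compl] at h4
  have hcard := card_le_univ (C \ B)
  refine ⟨f, ?_, ?_, ?_⟩ <;> ext y <;> rw [mem_cyclicArc]
  · rw [← h2 y]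
    omega
  · have : y ∈ insert z (B.erase x) ↔ y ∈ insert z B ∧ y ∉ ({x} : Finset α) := by grind
    have hBlt := card_lt_univ_of_notMem hzB
    rw [this, ← h3 y, ← h0 y]
    omega
  · have : y ∈ C ↔ y ∉ (C \ B)ᶜ ∨ y ∈ B ∩ C := by grind [mem_compl]
    rw [this, ← h4 y, ← h1 y]
    omega

lemma exists_card_eq_mem_disjoint {A : Finset α} {x : α} {c : ℕ} (hx : x ∉ A) (hc : 0 < c)
    (hAc : #A + c ≤ card α) : ∃ C : Finset α, #C = c ∧ x ∈ C ∧ Disjoint A C := by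
  obtain ⟨C, hxC, hCA, hC⟩ := exists_subsuperset_card_eq (n := c)
    (singleton_subset_iff.2 (mem_compl.2 hx)) (by rwa [card_singleton]) (by rw [card_compl]; omega)
  exact ⟨C, hC, singleton_subset_iff.1 hxC, subset_compl_iff_disjoint_left.1 hCA⟩

/-- The family of all sets containing `x`; its slices are the extremal families of the
Erdős–Ko–Rado theorem. -/
noncomputable def principalFamily (x : α) : Finset (Finset α) := {S | x ∈ S}

lemma mem_principalFamily {x : α} {S : Finset α} : S ∈ principalFamily x ↔ x ∈ S := by
  simp only [principalFamily, mem_filter_univ]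

lemma card_slice_principalFamily (x : α) {s : ℕ} (hs : 0 < s) :
    #((principalFamily x) # s) = (card α - 1).choose (s - 1) := by
  have hslice : (principalFamily x) # s = {S ∈ powersetCard s (univ : Finset α) | {x} ⊆ S} := by
    ext S
    rw [mem_slice, mem_principalFamily, mem_filter, mem_powersetCard_univ, singleton_subset_iff,
      and_comm]
  rw [hslice, card_filter_powersetCard_subset {x} univ s (subset_univ _) (by rwa [card_singleton]),
    card_singleton, Finset.card_univ]

variable {𝓕 : Finset (Finset α)} {s : ℕ}

lemma mem_of_exchange_notMem (hsn : 2 * s < card α) (hsized : (𝓕 : Set (Finset α)).Sized s)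
    (hint : (𝓕 : Set (Finset α)).Intersecting) (hcard : #𝓕 = (card α - 1).choose (s - 1))
    {B C : Finset α} {x z : α} (hB : B ∈ 𝓕) (hxB : x ∈ B) (hzB : z ∉ B)
    (hexch : insert z (B.erase x) ∉ 𝓕) (hC : #C = s) (hxC : x ∈ C) (hzC : z ∉ C) : C ∈ 𝓕 := by
  have hBs : #B = s := hsized hB
  have hs : 0 < s := hBs ▸ card_pos.2 ⟨x, hxB⟩
  rcases eq_or_ne C B with rfl | hCB
  · exact hB
  obtain ⟨f, hf0, hf1, hfC⟩ := exists_numbering_cyclicArc (hBs.trans hC.symm) hxB hxC hzB hzC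
  rw [hBs] at hf0 hf1 hfC
  have hpos : 0 < #(C \ B) := card_pos.2 (sdiff_nonempty.2 fun hsub =>
    hCB (eq_of_subset_of_card_le hsub (by omega)))
  have hlt : #(C \ B) < s := hC ▸ card_lt_card
    ((ssubset_iff_of_subset sdiff_subset).2 ⟨x, hxC, fun h => (mem_sdiff.1 h).2 hxB⟩)
  have hmem : card α - #(C \ B) ∈ arcStarts 𝓕 s f :=
    (cyclicallyClose_arcStarts hint).mem_of_card_eq arcStarts_subset_range hsn
      (card_arcStarts_eq hs hsn.le hsized hint hcard f)
      (mem_arcStarts.2 ⟨by omega, hf0.symm ▸ hB⟩)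
      (fun h => hexch (hf1 ▸ (mem_arcStarts.1 h).2)) (by omega) (by omega)
  exact hfC ▸ (mem_arcStarts.1 hmem).2

theorem exists_eq_slice_principalFamily_of_card_eq_choose (hs : 0 < s) (hsn : 2 * s < card α)
    (hsized : (𝓕 : Set (Finset α)).Sized s) (hint : (𝓕 : Set (Finset α)).Intersecting)
    (hcard : #𝓕 = (card α - 1).choose (s - 1)) :
    ∃ x, 𝓕 = (principalFamily x) # s := by
  obtain ⟨A, hA⟩ : 𝓕.Nonempty := card_pos.1 (hcard ▸ Nat.choose_pos (by omega))
  obtain ⟨D, hDA, hD⟩ := exists_subset_card_eq (s := Aᶜ) (n := s)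
    (by rw [card_compl, hsized hA]; omega)
  have hD𝓕 : D ∉ 𝓕 := fun h => hint hA h (subset_compl_iff_disjoint_left.1 hDA)
  obtain ⟨B, hB, x, hxB, z, hzB, hexch⟩ := exists_exchange_notMem hsized ⟨A, hA⟩ hD hD𝓕
  have hmem : ∀ C ∈ 𝓕, x ∈ C := by
    intro C hC
    by_contra hxC
    have hxzC : x ∉ insert z C := by
      rw [mem_insert, not_or]
      exact ⟨fun h => hzB (h ▸ hxB), hxC⟩
    have hCs : #C = s := hsized hC
    obtain ⟨E, hEs, hxE, hdisj⟩ := exists_card_eq_mem_disjoint hxzC hs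
      (by have := card_insert_le z C; omega)
    rw [disjoint_insert_left] at hdisj
    exact hint hC
      (mem_of_exchange_notMem hsn hsized hint hcard hB hxB hzB hexch hEs hxE hdisj.1) hdisj.2
  refine ⟨x, eq_of_subset_of_card_le (fun C hC => ?_) ?_⟩
  · exact mem_slice.2 ⟨mem_principalFamily.2 (hmem C hC), hsized hC⟩
  · rw [card_slice_principalFamily x hs, hcard]

end ErdosKoRado

section WeightedErdosKoRado

open Finset
open Fintype (card)
open scoped FinsetFamily

variable {α : Type*} [Fintype α] {𝓢 : Finset (Finset α)} {s : ℕ}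

lemma card_slice_compls (𝓢 : Finset (Finset α)) (hs : s ≤ card α) :
    #(𝓢ᶜˢ # s) = #(𝓢 # (card α - s)) := by
  refine card_nbij' compl compl ?_ ?_ (fun S _ => compl_compl S) (fun S _ => compl_compl S) <;>
    intro S hS <;> simp only [mem_coe, mem_slice, mem_compls, compl_compl, card_compl] at hS ⊢
  · exact ⟨hS.1, by rw [hS.2]⟩
  · exact ⟨hS.1, by omega⟩

lemma card_slice_add_card_slice_le_choose (h𝓢 : (𝓢 : Set (Finset α)).Intersecting)
    (hs : s ≤ card α) : #(𝓢 # s) + #(𝓢 # (card α - s)) ≤ (card α).choose s := by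
  have hdisj : Disjoint (𝓢 # s) (𝓢ᶜˢ # s) := disjoint_left.2 fun S hS hS' =>
    h𝓢 (mem_slice.1 hS).1 (mem_compls.1 (mem_slice.1 hS').1) disjoint_compl_right
  rw [← card_slice_compls 𝓢 hs, ← card_union_of_disjoint hdisj]
  refine Set.Sized.card_le ?_
  rw [coe_union, Set.sized_union]
  exact ⟨sized_slice, sized_slice⟩

lemma card_slice_principalFamily_add (x : α) (hs : s ≤ card α) :
    #((principalFamily x) # s) + #((principalFamily x) # (card α - s)) = (card α).choose s := by
  rw [← card_slice_compls _ hs, ← card_univ, ← card_powersetCard,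
    ← card_filter_add_card_filter_not (s := powersetCard s univ) (fun S => x ∈ S)]
  congr 2 <;> ext S <;> simp [mem_slice, mem_principalFamily, and_comm]

lemma card_slice_le_card_slice_principalFamily {n : ℕ} {𝓢 : Finset (Finset (Fin n))}
    (h𝓢 : (𝓢 : Set (Finset (Fin n))).Intersecting) (x : Fin n) (hs : 2 * s ≤ n) :
    #(𝓢 # s) ≤ #((principalFamily x) # s) := by
  rcases Nat.eq_zero_or_pos s with rfl | hs0
  · have hempty : 𝓢 # 0 = ∅ := by
      refine eq_empty_of_forall_notMem fun S hS => ?_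
      rw [mem_slice, card_eq_zero] at hS
      exact h𝓢.ne_bot hS.1 hS.2
    rw [hempty, card_empty]
    exact Nat.zero_le _
  · rw [card_slice_principalFamily x hs0, Fintype.card_fin]
    exact erdos_ko_rado (fun A hA B hB => h𝓢 (slice_subset hA) (slice_subset hB)) sized_slice
      (by omega)

lemma subset_principalFamily_of_slice_eq (h𝓢 : (𝓢 : Set (Finset α)).Intersecting) {x : α}
    (hs : 0 < s) (hcard : ∀ S ∈ 𝓢, #S + s ≤ card α) (hslice : 𝓢 # s = (principalFamily x) # s) :
    𝓢 ⊆ principalFamily x := by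
  intro S hS
  rw [mem_principalFamily]
  by_contra hxS
  obtain ⟨C, hCs, hxC, hdisj⟩ := exists_card_eq_mem_disjoint hxS hs (hcard S hS)
  have hC : C ∈ 𝓢 # s := hslice ▸ mem_slice.2 ⟨mem_principalFamily.2 hxC, hCs⟩
  exact h𝓢 hS (slice_subset hC) hdisj

lemma sum_comp_card_eq_sum_card_slice_mul (𝓢 : Finset (Finset α)) (w : ℕ → ℕ) :
    ∑ S ∈ 𝓢, w #S = ∑ s ∈ range (card α + 1), #(𝓢 # s) * w s := by
  rw [← sum_fiberwise_of_maps_to (t := range (card α + 1)) (g := Finset.card)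
    fun S _ => mem_range.2 (Nat.lt_succ_of_le (card_le_univ S))]
  refine sum_congr rfl fun s _ => ?_
  rw [sum_congr rfl fun S hS => by rw [(mem_filter.1 hS).2], sum_const, smul_eq_mul]
  rfl

/-- The total weight of the members of `𝓢` of size `s` and of size `card α - s`, counted twice when
these sizes agree. -/
noncomputable def pairedWeight (𝓢 : Finset (Finset α)) (w : ℕ → ℕ) (s : ℕ) : ℕ :=
  #(𝓢 # s) * w s + #(𝓢 # (card α - s)) * w (card α - s)

lemma sum_pairedWeight (𝓢 : Finset (Finset α)) (w : ℕ → ℕ) :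
    ∑ s ∈ range (card α + 1), pairedWeight 𝓢 w s = 2 * ∑ S ∈ 𝓢, w #S := by
  simp only [pairedWeight]
  rw [sum_add_distrib, sum_flip fun s => #(𝓢 # s) * w s, ← two_mul,
    sum_comp_card_eq_sum_card_slice_mul]

lemma pairedWeight_reflect (𝓢 : Finset (Finset α)) (w : ℕ → ℕ) (hs : s ≤ card α) :
    pairedWeight 𝓢 w (card α - s) = pairedWeight 𝓢 w s := by
  rw [pairedWeight, pairedWeight, Nat.sub_sub_self hs, add_comm]

lemma mul_add_mul_le_of_add_le_add {a a' b b' w w' : ℕ} (hab : a ≤ b) (hadd : a + a' ≤ b + b')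
    (hw : w' ≤ w) : a * w + a' * w' ≤ b * w + b' * w' := by
  obtain ⟨d, rfl⟩ := Nat.exists_eq_add_of_le hw
  calc a * (w' + d) + a' * w' = (a + a') * w' + a * d := by ring
    _ ≤ (b + b') * w' + b * d := by gcongr
    _ = b * (w' + d) + b' * w' := by ring

lemma mul_add_mul_lt_of_add_le_add {a a' b b' w w' : ℕ} (hab : a < b) (hadd : a + a' ≤ b + b')
    (hw : w' < w) : a * w + a' * w' < b * w + b' * w' := by
  obtain ⟨d, rfl⟩ := Nat.exists_eq_add_of_lt hw
  calc a * (w' + d + 1) + a' * w' = (a + a') * w' + a * (d + 1) := by ring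
    _ < (b + b') * w' + b * (d + 1) := add_lt_add_of_le_of_lt (by gcongr) (by gcongr)
    _ = b * (w' + d + 1) + b' * w' := by ring

variable {n c : ℕ} {𝓢 : Finset (Finset (Fin n))} {w : ℕ → ℕ}

lemma pairedWeight_le_pairedWeight_principalFamily
    (h𝓢 : (𝓢 : Set (Finset (Fin n))).Intersecting) (x : Fin n)
    (hw : ∀ s, 2 * s ≤ n → w (n - s) ≤ w s) (hs : s ≤ n) :
    pairedWeight 𝓢 w s ≤ pairedWeight (principalFamily x) w s := by
  wlog hs2 : 2 * s ≤ n generalizing s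
  · have hcard : s ≤ card (Fin n) := by rwa [Fintype.card_fin]
    rw [← pairedWeight_reflect _ _ hcard, ← pairedWeight_reflect _ _ hcard, Fintype.card_fin]
    exact this (by omega) (by omega)
  · have hcard : s ≤ card (Fin n) := by rwa [Fintype.card_fin]
    exact mul_add_mul_le_of_add_le_add (card_slice_le_card_slice_principalFamily h𝓢 x hs2)
      ((card_slice_add_card_slice_le_choose h𝓢 hcard).trans_eq
        (card_slice_principalFamily_add x hcard).symm) (by simpa using hw s hs2)

theorem card_slice_eq_of_sum_principalFamily_le (h𝓢 : (𝓢 : Set (Finset (Fin n))).Intersecting)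
    (x : Fin n) (hw : ∀ s, 2 * s ≤ n → w (n - s) ≤ w s) (hc : 2 * c ≤ n) (hwc : w (n - c) < w c)
    (hle : ∑ S ∈ principalFamily x, w #S ≤ ∑ S ∈ 𝓢, w #S) :
    #(𝓢 # c) = #((principalFamily x) # c) := by
  have hpair : ∀ s ∈ range (card (Fin n) + 1),
      pairedWeight 𝓢 w s ≤ pairedWeight (principalFamily x) w s := fun s hs =>
    pairedWeight_le_pairedWeight_principalFamily h𝓢 x hw
      (by rw [mem_range, Fintype.card_fin] at hs; omega)
  have hsum : ∑ s ∈ range (card (Fin n) + 1), pairedWeight 𝓢 w s =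
      ∑ s ∈ range (card (Fin n) + 1), pairedWeight (principalFamily x) w s :=
    (sum_le_sum hpair).antisymm (by rw [sum_pairedWeight, sum_pairedWeight]; omega)
  have hcard : c ≤ card (Fin n) := by rw [Fintype.card_fin]; omega
  have heq := (sum_eq_sum_iff_of_le hpair).1 hsum c (mem_range.2 (by omega))
  refine (card_slice_le_card_slice_principalFamily h𝓢 x hc).eq_of_not_lt fun hlt => heq.not_lt ?_
  exact mul_add_mul_lt_of_add_le_add hlt
    ((card_slice_add_card_slice_le_choose h𝓢 hcard).trans_eq
      (card_slice_principalFamily_add x hcard).symm) (by simpa using hwc)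

theorem exists_subset_principalFamily_of_sum_le (h𝓢 : (𝓢 : Set (Finset (Fin n))).Intersecting)
    (x : Fin n) (hw : ∀ s, 2 * s ≤ n → w (n - s) ≤ w s) (hc : 0 < c) (hcn : 2 * c ≤ n)
    (hwc : w (n - c) < w c) (hcard : ∀ S ∈ 𝓢, #S + c ≤ n)
    (hle : ∑ S ∈ principalFamily x, w #S ≤ ∑ S ∈ 𝓢, w #S) : ∃ y, 𝓢 ⊆ principalFamily y := by
  have hcn' : 2 * c < n := hcn.lt_of_ne fun h => hwc.ne (by rw [show n - c = c by omega])
  obtain ⟨y, hy⟩ := exists_eq_slice_principalFamily_of_card_eq_choose hc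
    (by rwa [Fintype.card_fin]) sized_slice
    (fun A hA B hB => h𝓢 (slice_subset hA) (slice_subset hB))
    ((card_slice_eq_of_sum_principalFamily_le h𝓢 x hw hcn hwc hle).trans
      (card_slice_principalFamily x hc))
  exact ⟨y, subset_principalFamily_of_slice_eq h𝓢 hc (by simpa using hcard) hy⟩

end WeightedErdosKoRado

section Multisets

open Finset Polynomial

variable {n m k : ℕ}

/-- The set of elements occurring in the multiset `f`. -/
noncomputable def multisetSupport (f : Fin n → Fin (m + 1)) : Finset (Fin n) :=
  {i | 1 ≤ (f i : ℕ)}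

lemma mem_multisetSupport {f : Fin n → Fin (m + 1)} {i : Fin n} :
    i ∈ multisetSupport f ↔ 1 ≤ (f i : ℕ) := by
  simp only [multisetSupport, mem_filter_univ]

lemma not_disjoint_multisetSupport {f g : Fin n → Fin (m + 1)} :
    ¬ Disjoint (multisetSupport f) (multisetSupport g) ↔ MIntersect f g := by
  simp only [not_disjoint_iff, mem_multisetSupport, MIntersect]

lemma card_multisetSupport_le {f : Fin n → Fin (m + 1)} (hf : IsKMultiset k f) :
    #(multisetSupport f) ≤ k :=
  calc #(multisetSupport f) = ∑ _i ∈ multisetSupport f, 1 := card_eq_sum_ones _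
    _ ≤ ∑ i ∈ multisetSupport f, (f i : ℕ) := sum_le_sum fun _ hi => mem_multisetSupport.1 hi
    _ ≤ ∑ i, (f i : ℕ) := sum_le_sum_of_subset (subset_univ _)
    _ = k := hf

lemma sum_X_pow_ne_zero_eq_partPoly (m : ℕ) :
    ∑ a : Fin (m + 1) with a ≠ 0, (X : ℕ[X]) ^ (a : ℕ) = partPoly m := by
  simp [sum_filter, Fin.sum_univ_succ, partPoly, Fin.sum_univ_eq_sum_range (fun i => X ^ (i + 1))]

lemma multisetSupport_eq_iff {f : Fin n → Fin (m + 1)} {S : Finset (Fin n)} :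
    multisetSupport f = S ↔ f ∈ Fintype.piFinset fun i =>
      if i ∈ S then (univ.filter (· ≠ 0) : Finset (Fin (m + 1))) else {0} := by
  rw [Fintype.mem_piFinset, Finset.ext_iff]
  refine forall_congr' fun i => ?_
  rw [mem_multisetSupport, Nat.one_le_iff_ne_zero, Fin.val_ne_zero_iff]
  split_ifs with hi <;> simp [hi]

lemma card_filter_multisetSupport_eq (m k : ℕ) (S : Finset (Fin n)) :
    #{f : Fin n → Fin (m + 1) | IsKMultiset k f ∧ multisetSupport f = S} = compCount m #S k := by
  let values : Fin n → Finset (Fin (m + 1)) := fun i => if i ∈ S then univ.filter (· ≠ 0) else {0}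
  have hpow : partPoly m ^ #S = ∑ f ∈ Fintype.piFinset values, X ^ ∑ i, (f i : ℕ) :=
    calc partPoly m ^ #S = ∏ i, if i ∈ S then partPoly m else 1 := by simp
      _ = ∏ i, ∑ a ∈ values i, X ^ (a : ℕ) := by
        refine prod_congr rfl fun i _ => ?_
        simp only [values]
        split_ifs
        · exact (sum_X_pow_ne_zero_eq_partPoly m).symm
        · simp
      _ = ∑ f ∈ Fintype.piFinset values, X ^ ∑ i, (f i : ℕ) := by
        simp only [prod_univ_sum, prod_pow_eq_pow_sum]
  rw [compCount, hpow, finsetSum_coeff]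
  simp only [coeff_X_pow]
  rw [← card_filter]
  congr 1
  ext f
  rw [mem_filter_univ, mem_filter, multisetSupport_eq_iff, IsKMultiset, and_comm, eq_comm (a := k)]

variable {𝓐 : Finset (Fin n → Fin (m + 1))}

lemma intersecting_image_multisetSupport (h𝓐 : ∀ f ∈ 𝓐, ∀ g ∈ 𝓐, MIntersect f g) :
    (𝓐.image multisetSupport : Set (Finset (Fin n))).Intersecting := by
  rw [coe_image]
  rintro _ ⟨f, hf, rfl⟩ _ ⟨g, hg, rfl⟩
  exact not_disjoint_multisetSupport.2 (h𝓐 f hf g hg)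

lemma card_le_sum_compCount (h𝓐 : ∀ f ∈ 𝓐, IsKMultiset k f) :
    #𝓐 ≤ ∑ S ∈ 𝓐.image multisetSupport, compCount m #S k := by
  rw [card_eq_sum_card_image multisetSupport 𝓐]
  refine sum_le_sum fun S _ => ?_
  rw [← card_filter_multisetSupport_eq m k S]
  exact card_le_card fun f hf => by
    rw [mem_filter] at hf
    exact (mem_filter_univ f).2 ⟨h𝓐 f hf.1, hf.2⟩

lemma mem_star {x : Fin n} {f : Fin n → Fin (m + 1)} :
    f ∈ _root_.star n m k x ↔ IsKMultiset k f ∧ x ∈ multisetSupport f := by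
  rw [_root_.star, mem_filter_univ, mem_multisetSupport]

lemma card_star (m k : ℕ) (x : Fin n) :
    #(_root_.star n m k x) = ∑ S ∈ principalFamily x, compCount m #S k := by
  rw [card_eq_sum_card_fiberwise (f := multisetSupport) (t := principalFamily x)
    fun f hf => mem_principalFamily.2 (mem_star.1 hf).2]
  refine sum_congr rfl fun S hS => ?_
  rw [← card_filter_multisetSupport_eq m k S]
  congr 1
  ext f
  rw [mem_filter, mem_star, mem_filter_univ, and_right_comm]
  exact and_iff_left_of_imp fun h => h.2 ▸ mem_principalFamily.1 hS

lemma card_star_le_of_maximal (h𝓐 : ∀ 𝓑 : Finset (Fin n → Fin (m + 1)),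
      (∀ f ∈ 𝓑, IsKMultiset k f) → (∀ f ∈ 𝓑, ∀ g ∈ 𝓑, MIntersect f g) → #𝓑 ≤ #𝓐) (x : Fin n) :
    #(_root_.star n m k x) ≤ #𝓐 :=
  h𝓐 _ (fun _ hf => (mem_star.1 hf).1) fun _ hf _ hg =>
    ⟨x, mem_multisetSupport.1 (mem_star.1 hf).2, mem_multisetSupport.1 (mem_star.1 hg).2⟩

lemma compCount_sub_ceilDiv_lt (hm : 0 < m)
    (hcase : k + k ⌈/⌉ m < n ∨ n = k + k ⌈/⌉ m ∧ m < k ∧ ¬ m ∣ k) :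
    compCount m (n - k ⌈/⌉ m) k < compCount m (k ⌈/⌉ m) k := by
  rcases hcase with hlt | ⟨rfl, hmk, hdvd⟩
  · exact compCount_lt_compCount_ceilDiv_of_lt hm (by omega)
  · rw [Nat.add_sub_cancel]
    exact compCount_self_lt_compCount_ceilDiv hm hmk hdvd

end Multisets

theorem stmt_16 (k m n : ℕ) (hk : 2 ≤ k) (hm : 1 ≤ m) (hn : 1 ≤ n)
    (hcase : k + (k + m - 1) / m < n ∨
      (n = k + (k + m - 1) / m ∧ m < k ∧ ¬ m ∣ k))
    (𝓐 : Finset (Fin n → Fin (m + 1)))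
    (h𝓐k : ∀ f ∈ 𝓐, IsKMultiset k f)
    (h𝓐int : ∀ f ∈ 𝓐, ∀ g ∈ 𝓐, MIntersect f g)
    (hmax : ∀ 𝓑 : Finset (Fin n → Fin (m + 1)),
      (∀ f ∈ 𝓑, IsKMultiset k f) → (∀ f ∈ 𝓑, ∀ g ∈ 𝓑, MIntersect f g) →
      𝓑.card ≤ 𝓐.card) :
    ∃ x : Fin n, 𝓐 = star n m k x := by
  rw [← Nat.ceilDiv_eq_add_pred_div] at hcase
  have hceil : k ⌈/⌉ m ≤ k := ceilDiv_le_self hm k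
  have hstar : ∀ x, (star n m k x).card ≤ 𝓐.card := card_star_le_of_maximal hmax
  have hle : ∑ S ∈ principalFamily (⟨0, hn⟩ : Fin n), compCount m S.card k ≤
      ∑ S ∈ 𝓐.image multisetSupport, compCount m S.card k :=
    card_star m k _ ▸ (hstar _).trans (card_le_sum_compCount h𝓐k)
  have hcard : ∀ S ∈ 𝓐.image multisetSupport, S.card + k ⌈/⌉ m ≤ n := by
    rw [Finset.forall_mem_image]
    intro f hf
    have := card_multisetSupport_le (h𝓐k f hf)
    omega
  obtain ⟨x, hx⟩ := exists_subset_principalFamily_of_sum_le (w := fun s => compCount m s k)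
    (intersecting_image_multisetSupport h𝓐int) ⟨0, hn⟩
    (fun s hs => compCount_le_compCount hm (by omega) (by omega)) (ceilDiv_pos hm (by omega))
    (by omega) (compCount_sub_ceilDiv_lt hm hcase) hcard hle
  refine ⟨x, Finset.eq_of_subset_of_card_le (fun f hf => mem_star.2 ⟨h𝓐k f hf, ?_⟩) (hstar x)⟩
  exact mem_principalFamily.1 (hx (Finset.mem_image_of_mem _ hf))
end
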